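/- Let k be a finite field and V a finite-dimensional k-vector space. For every automorphism φ of the scheme Ω(V) over k there exists a unique automorphism ψ of the projective space P(V) over k such that ψ ∘ ι = ι ∘ φ, where ι : Ω(V) → P(V) denotes the open immersion. (Equivalently, the restriction map Aut_k(P(V)) → Aut_k(Ω(V)) is bijective.) -/

import Mathlib

open AlgebraicGeometry CategoryTheory MvPolynomial Module

attribute [local instance] MvPolynomial.gradedAlgebra

/-- The projective space `P(V)` over `k` for an `m`-dimensional vector space `V`:
the Proj of the polynomial ring in `m` variables over `k` with its standard
grading (equivalently, of `Sym V`). -/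
noncomputable abbrev projSpace (k : Type*) [Field k] (m : ℕ) : Scheme :=
  Proj (homogeneousSubmodule (Fin m) k)

/-- The set of points of `P(V)` lying on no `k`-rational hyperplane, i.e. in the
complement of the zero locus of every nonzero linear form. -/
def drinfeldSet (k : Type*) [Field k] (m : ℕ) : Set (projSpace k m) :=
  {x | ∀ c : Fin m → k, c ≠ 0 →
    (∑ i, MvPolynomial.C (c i) * MvPolynomial.X i) ∉ x.asHomogeneousIdeal}

lemma isOpen_drinfeldSet (k : Type*) [Field k] [Fintype k] (m : ℕ) :
    IsOpen (drinfeldSet k m) := by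
  have : drinfeldSet k m = ⋂ c : {c : Fin m → k // c ≠ 0},
      (Proj.basicOpen (homogeneousSubmodule (Fin m) k)
        (∑ i, MvPolynomial.C (c.1 i) * MvPolynomial.X i) : Set (projSpace k m)) := by
    ext x
    simp only [drinfeldSet, Set.mem_setOf_eq, Set.mem_iInter, Subtype.forall]
    rfl
  rw [this]
  exact isOpen_iInter_of_finite fun c =>
    (Proj.basicOpen (homogeneousSubmodule (Fin m) k) _).isOpen

/-- The Drinfeld half-space `Ω(V)` as an open subset of `P(V)`. -/
def drinfeldOpens (k : Type*) [Field k] [Fintype k] (m : ℕ) : (projSpace k m).Opens :=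
  ⟨drinfeldSet k m, isOpen_drinfeldSet k m⟩

/-- The Drinfeld half-space `Ω(V)` as a scheme. -/
noncomputable abbrev drinfeldScheme (k : Type*) [Field k] [Fintype k] (m : ℕ) : Scheme :=
  (drinfeldOpens k m).toScheme

/-- The open immersion `ι : Ω(V) → P(V)`. -/
noncomputable def drinfeldι (k : Type*) [Field k] [Fintype k] (m : ℕ) :
    drinfeldScheme k m ⟶ projSpace k m :=
  (drinfeldOpens k m).ι

/-- The structure morphism `P(V) ⟶ Spec k`. -/
noncomputable def projStruct (k : Type*) [Field k] (m : ℕ) :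
    projSpace k m ⟶ Spec (CommRingCat.of k) :=
  Proj.toSpecZero (homogeneousSubmodule (Fin m) k) ≫
    Spec.map (CommRingCat.ofHom
      ((GradedRing.projZeroRingHom' (homogeneousSubmodule (Fin m) k)).comp
        (algebraMap k (MvPolynomial (Fin m) k))))

/-- The structure morphism `Ω(V) ⟶ Spec k`. -/
noncomputable def drinfeldStruct (k : Type*) [Field k] [Fintype k] (m : ℕ) :
    drinfeldScheme k m ⟶ Spec (CommRingCat.of k) :=
  drinfeldι k m ≫ projStruct k m



/-! ## Combinatorics of norms -/

section Comb

structure IsNorm (k : Type*) [Field k] {V : Type*} [AddCommGroup V] [Module k V] (α : V → ℤ) :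
    Prop where
  smul : ∀ (c : k) (v : V), c ≠ 0 → α (c • v) = α v
  add : ∀ u v : V, u ≠ 0 → v ≠ 0 → u + v ≠ 0 → min (α u) (α v) ≤ α (u + v)

namespace IsNorm

variable {k : Type*} [Field k] {V : Type*} [AddCommGroup V] [Module k V]

lemma neg {α : V → ℤ} (h : IsNorm k α) (v : V) : α (-v) = α v := by
  have := h.smul (-1) v (by simp)
  simpa using this

lemma congr {α β : V → ℤ} (h : IsNorm k α) (c : ℤ) (hab : ∀ v ≠ 0, β v = α v + c) :
    IsNorm k β where
  smul a v ha := by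
    by_cases hv : v = 0
    · simp [hv]
    · rw [hab _ hv, hab _ (smul_ne_zero ha hv), h.smul a v ha]
  add u v hu hv huv := by
    rw [hab _ hu, hab _ hv, hab _ huv]
    have := h.add u v hu hv huv
    omega

/-- strict ultrametric equality -/
lemma add_eq {α : V → ℤ} (h : IsNorm k α) {u v : V} (hu : u ≠ 0) (hv : v ≠ 0)
    (hlt : α u < α v) : u + v ≠ 0 ∧ α (u + v) = α u := by
  have huv : u + v ≠ 0 := by
    intro h0
    have : v = -u := by rw [eq_neg_iff_add_eq_zero, add_comm]; exact h0
    rw [this, h.neg] at hlt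
    exact lt_irrefl _ hlt
  refine ⟨huv, ?_⟩
  have h1 := h.add u v hu hv huv
  have h2 := h.add (u + v) (-v) huv (neg_ne_zero.mpr hv) (by simpa using hu)
  rw [h.neg] at h2
  simp only [add_neg_cancel_right] at h2
  omega

lemma compat {β γ : V → ℤ} (hβ : IsNorm k β) (hγ : IsNorm k γ) (hs : IsNorm k (β + γ))
    {u u' : V} (hu : u ≠ 0) (hu' : u' ≠ 0) (h1 : β u' < β u) (h2 : γ u < γ u') : False := by
  obtain ⟨h3, h4⟩ := hβ.add_eq hu' hu h1
  obtain ⟨_, h5⟩ := hγ.add_eq hu hu' h2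
  have h6 := hs.add u' u hu' hu h3
  simp only [Pi.add_apply] at h6
  rw [h4, add_comm u' u, h5] at h6
  omega

end IsNorm

open Classical in
noncomputable def ind {k : Type*} [Field k] {V : Type*} [AddCommGroup V] [Module k V]
    (U : Submodule k V) (v : V) : ℤ := if v ∈ U then 1 else 0

section ind
variable {k : Type*} [Field k] {V : Type*} [AddCommGroup V] [Module k V]

lemma ind_of_mem {U : Submodule k V} {v : V} (h : v ∈ U) : ind U v = 1 := by simp [ind, h]
lemma ind_of_notMem {U : Submodule k V} {v : V} (h : v ∉ U) : ind U v = 0 := by simp [ind, h]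

lemma isNorm_ind (U : Submodule k V) : IsNorm k (ind U) where
  smul c v hc := by
    unfold ind
    rw [U.smul_mem_iff hc]
  add u v _ _ _ := by
    unfold ind
    by_cases hu : u ∈ U <;> by_cases hv : v ∈ U <;> simp [hu, hv, U.add_mem]
    all_goals split_ifs <;> simp

end ind

/-- The abstract situation: a group `N` of functions on `V`, containing all norms. -/
structure Frame (k : Type*) [Field k] {V : Type*} [AddCommGroup V] [Module k V]
    {N : Type*} [AddCommGroup N] (ρ : N →+ (V → ℤ)) (v0 : V) : Prop where
  inj : Function.Injective ρ
  zero : ∀ h, ρ h 0 = 0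
  base : ∀ h, ρ h v0 = 0
  base_ne : v0 ≠ 0
  smul : ∀ h (c : k) v, c ≠ 0 → ρ h (c • v) = ρ h v
  ex : ∀ α : V → ℤ, IsNorm k α → ∃ h, ∀ v ≠ 0, ρ h v = α v - α v0

namespace Frame

variable {k : Type*} [Field k] {V : Type*} [AddCommGroup V] [Module k V]
    {N : Type*} [AddCommGroup N] {ρ : N →+ (V → ℤ)} {v0 : V}

noncomputable def e (F : Frame k ρ v0) (U : Submodule k V) : N := (F.ex _ (isNorm_ind U)).choose

variable (F : Frame k ρ v0)

include F in
lemma ext {g h : N} (H : ∀ v ≠ 0, ρ g v = ρ h v) : g = h := by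
  apply F.inj
  funext v
  by_cases hv : v = 0
  · rw [hv, F.zero, F.zero]
  · exact H v hv

lemma rho_e (U : Submodule k V) {v : V} (hv : v ≠ 0) :
    ρ (F.e U) v = ind U v - ind U v0 := (F.ex _ (isNorm_ind U)).choose_spec v hv

lemma norm_e (U : Submodule k V) : IsNorm k (ρ (F.e U)) :=
  (isNorm_ind U).congr (- ind U v0) fun v hv => by rw [F.rho_e U hv]; ring

include F in
lemma eq_zero_of_const {h : N} (c : ℤ) (H : ∀ v ≠ 0, ρ h v = c) : h = 0 := by
  apply F.ext
  intro v hv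
  have := H v0 F.base_ne
  rw [F.base] at this
  rw [H v hv, ← this]; simp

def Proper (U : Submodule k V) : Prop := U ≠ ⊥ ∧ U ≠ ⊤

lemma e_inj {U U' : Submodule k V} (hU : Proper U) (hU' : Proper U') (h : F.e U = F.e U') :
    U = U' := by
  have key : ∀ v ≠ 0, ind U v - ind U' v = ind U v0 - ind U' v0 := by
    intro v hv
    have := F.rho_e U hv
    rw [h, F.rho_e U' hv] at this
    omega
  obtain ⟨x, hx⟩ := (Submodule.ne_bot_iff _).1 hU.1
  obtain ⟨y, hy⟩ := (Submodule.ne_bot_iff _).1 hU'.1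
  obtain ⟨a, ha⟩ : ∃ a, a ∉ U := by
    by_contra! hh; exact hU.2 (by ext; simp [hh])
  obtain ⟨b, hb⟩ : ∃ a, a ∉ U' := by
    by_contra! hh; exact hU'.2 (by ext; simp [hh])
  have hc : ind U v0 - ind U' v0 = 0 := by
    have ha0 : a ≠ 0 := fun h => ha (h ▸ U.zero_mem)
    have hb0 : b ≠ 0 := fun h => hb (h ▸ U'.zero_mem)
    have h1 := key a ha0
    have h2 := key b hb0
    rw [ind_of_notMem ha] at h1
    rw [ind_of_notMem hb] at h2
    unfold ind at *
    split_ifs at * <;> omega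
  ext v
  by_cases hv : v = 0
  · simp [hv]
  · have := key v hv
    rw [hc] at this
    unfold ind at this
    split_ifs at this <;> simp_all

include F in
lemma e_ne_zero {U : Submodule k V} (hU : Proper U) : F.e U ≠ 0 := by
  intro h
  obtain ⟨x, hx, hx0⟩ := (Submodule.ne_bot_iff _).1 hU.1
  obtain ⟨a, ha⟩ : ∃ a, a ∉ U := by
    by_contra! hh; exact hU.2 (by ext; simp [hh])
  have ha0 : a ≠ 0 := fun h => ha (h ▸ U.zero_mem)
  have h1 := F.rho_e U hx0
  have h2 := F.rho_e U ha0
  rw [h, ind_of_mem hx] at h1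
  rw [h, ind_of_notMem ha] at h2
  simp at h1 h2
  omega

def Indec (_ : Frame k ρ v0) (h : N) : Prop := IsNorm k (ρ h) ∧ h ≠ 0 ∧
  ∀ β γ : N, IsNorm k (ρ β) → IsNorm k (ρ γ) → h = β + γ → β = 0 ∨ γ = 0

lemma exists_e_of_indec [Finite V] {h : N} (H : F.Indec h) : ∃ U, Proper U ∧ h = F.e U := by
  obtain ⟨hn, h0, hd⟩ := H
  have : Fintype V := Fintype.ofFinite V
  classical
  obtain ⟨m, hm, hmax⟩ := Finset.exists_max_image (Finset.univ.filter fun v : V => v ≠ 0) (ρ h)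
    ⟨v0, by simp [F.base_ne]⟩
  simp only [Finset.mem_filter, Finset.mem_univ, true_and] at hm hmax
  let U : Submodule k V :=
    { carrier := {v | v = 0 ∨ ρ h v = ρ h m}
      zero_mem' := Or.inl rfl
      add_mem' := by
        intro a b ha hb
        by_cases ha0 : a = 0
        · simpa [ha0] using hb
        by_cases hb0 : b = 0
        · simpa [hb0] using ha
        by_cases hab : a + b = 0
        · exact Or.inl hab
        have ha1 := ha.resolve_left ha0
        have hb1 := hb.resolve_left hb0
        have h1 := hn.add a b ha0 hb0 hab
        have h2 := hmax (a + b) hab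
        right
        rw [ha1, hb1] at h1
        simp at h1
        omega
      smul_mem' := by
        intro c v hv
        by_cases hc : c = 0
        · left; simp [hc]
        · rcases hv with hv | hv
          · left; simp [hv]
          · right; rw [← hv]; exact hn.smul c v hc }
  have memU : ∀ v, v ≠ 0 → (v ∈ U ↔ ρ h v = ρ h m) := by
    intro v hv
    change (v = 0 ∨ ρ h v = ρ h m) ↔ _
    simp [hv]
  have hU : Proper U := by
    constructor
    · rw [Submodule.ne_bot_iff]
      exact ⟨m, (memU m hm).2 rfl, hm⟩
    · intro hU
      apply h0
      apply F.eq_zero_of_const (ρ h m)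
      intro v hv
      rw [← memU v hv, hU]; trivial
  refine ⟨U, hU, ?_⟩
  have hn' : IsNorm k (ρ (h - F.e U)) := by
    have h1 : IsNorm k (fun v => min (ρ h v) (ρ h m - 1)) :=
      { smul := fun c v hc => by simp only [hn.smul c v hc]
        add := fun u v hu hv huv => by
          have := hn.add u v hu hv huv
          omega }
    apply h1.congr (ind U v0)
    intro v hv
    rw [map_sub, Pi.sub_apply, F.rho_e U hv]
    have h2 := hmax v hv
    by_cases hvU : v ∈ U
    · have h3 := (memU v hv).1 hvU
      rw [ind_of_mem hvU]; omega
    · have h3 := mt (memU v hv).2 hvU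
      rw [ind_of_notMem hvU]; omega
  rcases hd (F.e U) (h - F.e U) (F.norm_e U) hn' (by abel) with h1 | h1
  · exact absurd h1 (F.e_ne_zero hU)
  · exact sub_eq_zero.1 h1

lemma indec_e {U : Submodule k V} (hU : Proper U) : F.Indec (F.e U) := by
  classical
  refine ⟨F.norm_e U, F.e_ne_zero hU, ?_⟩
  intro β γ hβ hγ hs
  have hsn : IsNorm k (ρ β + ρ γ) := by rw [← map_add, ← hs]; exact F.norm_e U
  have hsum : ∀ v ≠ 0, ρ β v + ρ γ v = ind U v - ind U v0 := by
    intro v hv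
    rw [← F.rho_e U hv, hs]; simp
  have hcst : ∀ u u' : V, u ≠ 0 → u' ≠ 0 → ind U u = ind U u' → ρ β u = ρ β u' := by
    intro u u' hu hu' he
    have h1 := hsum u hu
    have h2 := hsum u' hu'
    rcases lt_trichotomy (ρ β u) (ρ β u') with h | h | h
    · exact (hβ.compat hγ hsn hu' hu h (by omega)).elim
    · exact h
    · exact (hβ.compat hγ hsn hu hu' h (by omega)).elim
  obtain ⟨x, hx, hx0⟩ := (Submodule.ne_bot_iff _).1 hU.1
  obtain ⟨a, ha⟩ : ∃ a, a ∉ U := by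
    by_contra! hh; exact hU.2 (by ext; simp [hh])
  have ha0 : a ≠ 0 := fun h => ha (h ▸ U.zero_mem)
  have sx := hsum x hx0
  have sa := hsum a ha0
  rw [ind_of_mem hx] at sx
  rw [ind_of_notMem ha] at sa
  have n1 : ¬ (ρ β a < ρ β x ∧ ρ γ x < ρ γ a) := fun h => hβ.compat hγ hsn hx0 ha0 h.1 h.2
  have n2 : ¬ (ρ β x < ρ β a ∧ ρ γ a < ρ γ x) := fun h => hβ.compat hγ hsn ha0 hx0 h.1 h.2
  have hcase : ∀ v : V, v ≠ 0 → ρ β v = if v ∈ U then ρ β x else ρ β a := by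
    intro v hv
    split_ifs with hvU
    · exact hcst v x hv hx0 (by rw [ind_of_mem hvU, ind_of_mem hx])
    · exact hcst v a hv ha0 (by rw [ind_of_notMem hvU, ind_of_notMem ha])
  have : ρ β x = ρ β a ∨ ρ γ x = ρ γ a := by omega
  rcases this with h | h
  · left
    apply F.eq_zero_of_const (ρ β a)
    intro v hv
    rw [hcase v hv]; split_ifs <;> simp [h]
  · right
    apply F.eq_zero_of_const (ρ γ a)
    intro v hv
    have h1 := hsum v hv
    rw [hcase v hv] at h1
    by_cases hvU : v ∈ U
    · rw [if_pos hvU, ind_of_mem hvU] at h1; omega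
    · rw [if_neg hvU, ind_of_notMem hvU] at h1; omega

lemma norm_add_iff (U U' : Submodule k V) :
    IsNorm k (ρ (F.e U + F.e U')) ↔ U ≤ U' ∨ U' ≤ U := by
  constructor
  · intro h
    by_contra! hc
    obtain ⟨h1, h2⟩ := hc
    obtain ⟨u, hu, huU'⟩ := SetLike.not_le_iff_exists.1 h1
    obtain ⟨u', hu', huU⟩ := SetLike.not_le_iff_exists.1 h2
    have hu0 : u ≠ 0 := fun h => huU' (h ▸ U'.zero_mem)
    have hu'0 : u' ≠ 0 := fun h => huU (h ▸ U.zero_mem)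
    refine (F.norm_e U).compat (F.norm_e U') (by rw [← map_add]; exact h) hu0 hu'0 ?_ ?_
    · rw [F.rho_e U hu0, F.rho_e U hu'0, ind_of_mem hu, ind_of_notMem huU]; omega
    · rw [F.rho_e U' hu0, F.rho_e U' hu'0, ind_of_mem hu', ind_of_notMem huU']; omega
  · intro h
    wlog hle : U ≤ U' generalizing U U'
    · rw [add_comm]
      exact this U' U h.symm (h.resolve_left hle)
    have h1 : IsNorm k (fun v => ind U v + ind U' v) :=
      { smul := fun c v hc => by simp only [(isNorm_ind U).smul c v hc, (isNorm_ind U').smul c v hc]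
        add := fun u v hu hv huv => by
          have a1 := (isNorm_ind U).add u v hu hv huv
          have a2 := (isNorm_ind U').add u v hu hv huv
          have a3 := @hle u
          have a4 := @hle v
          unfold ind at *
          split_ifs at * <;> simp_all }
    apply h1.congr (-(ind U v0) - ind U' v0)
    intro v hv
    rw [map_add, Pi.add_apply, F.rho_e U hv, F.rho_e U' hv]; ring

end Frame

end Comb


section Comb2

namespace Frame

variable {k : Type*} [Field k] {V : Type*} [AddCommGroup V] [Module k V]
    {N : Type*} [AddCommGroup N] {ρ : N →+ (V → ℤ)} {v0 : V}

variable (F : Frame k ρ v0)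

include F in
lemma exists_perm [Finite V] (Φ : N ≃+ N) (hΦ : ∀ h, IsNorm k (ρ (Φ h)) ↔ IsNorm k (ρ h))
    {U : Submodule k V} (hU : Proper U) : ∃ U', Proper U' ∧ Φ (F.e U) = F.e U' := by
  apply F.exists_e_of_indec
  obtain ⟨h1, h2, h3⟩ := F.indec_e hU
  refine ⟨(hΦ _).2 h1, by simpa using h2, ?_⟩
  intro β γ hβ hγ hs
  have := h3 (Φ.symm β) (Φ.symm γ) ((hΦ _).1 (by simpa using hβ)) ((hΦ _).1 (by simpa using hγ))
    (by rw [← map_add, ← hs]; simp)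
  simpa using this

section modq

open Module

variable [Fintype k] [Fintype V]

/-- weighted sum over a subspace -/
noncomputable def S (ρ : N →+ (V → ℤ)) (H : Submodule k V) : N →+ ℤ where
  toFun h := ∑ v, ind H v * ρ h v
  map_zero' := by simp
  map_add' a b := by simp [mul_add, Finset.sum_add_distrib]

omit [Fintype k] in
lemma sum_ind (U : Submodule k V) : ∑ v, ind U v = (Nat.card U : ℤ) := by
  classical
  unfold ind
  rw [Finset.sum_ite]
  simp only [Finset.sum_const, nsmul_eq_mul, mul_one, mul_zero, add_zero]
  congr 1
  rw [Nat.card_eq_fintype_card, Fintype.card_subtype]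

lemma dvd_card {U : Submodule k V} (hU : U ≠ ⊥) : (Nat.card k : ℤ) ∣ Nat.card U := by
  rw [Module.natCard_eq_pow_finrank (K := k) (V := U)]
  have : finrank k U ≠ 0 := by
    rw [ne_eq, Submodule.finrank_eq_zero]; exact hU
  exact_mod_cast dvd_pow_self _ this

omit [Fintype k] in
lemma S_e (H U : Submodule k V) :
    S ρ H (F.e U) = (Nat.card (U ⊓ H : Submodule k V) : ℤ) - ind U v0 * Nat.card H
      - (1 - ind U v0) := by
  classical
  change ∑ v, ind H v * ρ (F.e U) v = _
  have h1 : ∀ v, ind H v * ρ (F.e U) v =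
      ind (U ⊓ H) v - ind U v0 * ind H v - (if v = 0 then (1 - ind U v0) else 0) := by
    intro v
    split_ifs with hv
    · subst hv
      rw [F.zero, ind_of_mem H.zero_mem, ind_of_mem (U ⊓ H).zero_mem]; ring
    · rw [F.rho_e U hv]
      have : ind (U ⊓ H) v = ind U v * ind H v := by
        unfold ind
        by_cases h1 : v ∈ U <;> by_cases h2 : v ∈ H <;> simp [h1, h2]
      rw [this]; ring
  rw [Finset.sum_congr rfl fun v _ => h1 v]
  rw [Finset.sum_sub_distrib, Finset.sum_sub_distrib, ← Finset.mul_sum, sum_ind, sum_ind]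
  simp

include F in
omit [Fintype V] in
lemma smul_eq_sum [Fintype V] [DecidableEq V] (h : N) :
    ((Nat.card k : ℤ) - 1) • h =
      ∑ v ∈ Finset.univ.filter (fun v : V => v ≠ 0), ρ h v • F.e (Submodule.span k {v}) := by
  classical
  have key : ∀ u : V, u ≠ 0 →
      ∑ v ∈ Finset.univ.filter (fun v : V => v ≠ 0), ρ h v * ind (Submodule.span k {v}) u =
        ((Nat.card k : ℤ) - 1) * ρ h u := by
    intro u hu
    have h1 : ∀ v ∈ Finset.univ.filter (fun v : V => v ≠ 0),
        ρ h v * ind (Submodule.span k {v}) u =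
          if (∃ c : kˣ, v = c • u) then ρ h u else 0 := by
      intro v hv
      have hv0 : v ≠ 0 := by simpa using hv
      by_cases hc : ∃ c : kˣ, v = c • u
      · rw [if_pos hc]
        obtain ⟨c, rfl⟩ := hc
        rw [ind_of_mem]
        · rw [mul_one]; exact F.smul h c u c.ne_zero
        · rw [Submodule.mem_span_singleton]
          exact ⟨((c⁻¹ : kˣ) : k), by simp [Units.smul_def]⟩
      · rw [if_neg hc, ind_of_notMem, mul_zero]
        intro hm
        rw [Submodule.mem_span_singleton] at hm
        obtain ⟨a, rfl⟩ := hm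
        have ha : a ≠ 0 := by rintro rfl; simp at hu
        exact hc ⟨(Units.mk0 a ha)⁻¹, by simp [Units.smul_def, smul_smul, ha]⟩
    rw [Finset.sum_congr rfl h1, Finset.sum_ite, Finset.sum_const_zero, add_zero, Finset.sum_const]
    have h2 : (Finset.univ.filter (fun v : V => v ≠ 0)).filter (fun v => ∃ c : kˣ, v = c • u) =
        Finset.univ.image (fun c : kˣ => c • u) := by
      ext v
      simp only [Finset.mem_filter, Finset.mem_univ, true_and, Finset.mem_image]
      constructor
      · rintro ⟨_, c, rfl⟩; exact ⟨c, rfl⟩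
      · rintro ⟨c, rfl⟩
        refine ⟨?_, c, rfl⟩
        rw [Units.smul_def]; exact smul_ne_zero c.ne_zero hu
    rw [h2, Finset.card_image_of_injective, Finset.card_univ, Fintype.card_units,
      Nat.card_eq_fintype_card]
    · have : 1 ≤ Fintype.card k := Fintype.card_pos
      rw [nsmul_eq_mul]; push_cast [this]; ring
    · intro a b hab
      simp only [Units.smul_def] at hab
      exact Units.ext (smul_left_injective k hu hab)
  apply F.ext
  intro u hu
  rw [map_zsmul, map_sum, Pi.smul_apply, Finset.sum_apply]
  simp only [map_zsmul, Pi.smul_apply, smul_eq_mul]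
  rw [Finset.sum_congr rfl fun v _ => by rw [F.rho_e _ hu, mul_sub], Finset.sum_sub_distrib,
    key u hu, key v0 F.base_ne, F.base]
  ring

lemma modq_contra [DecidableEq V] (h2 : 2 ≤ finrank k V) (Φ : N ≃+ N)
    (f : Submodule k V → Submodule k V)
    (hf : ∀ v : V, v ≠ 0 → Φ (F.e (Submodule.span k {v})) = F.e (f (Submodule.span k {v})) ∧
      2 ≤ finrank k (f (Submodule.span k {v}))) : False := by
  have : FiniteDimensional k V := inferInstance
  have hv0 := F.base_ne
  set l := Submodule.span k {v0} with hl
  have hl1 : finrank k l = 1 := finrank_span_singleton hv0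
  obtain ⟨H', hH'⟩ := Submodule.exists_isCompl l
  have hH'1 : finrank k l + finrank k H' = finrank k V := Submodule.finrank_add_eq_of_isCompl hH'
  have hlt : l ≠ ⊤ := by
    intro h
    rw [h, finrank_top] at hl1
    omega
  obtain ⟨H, hH, hlH⟩ := (eq_top_or_exists_le_coatom l).resolve_left hlt
  have hcoatom : finrank k H + 1 = finrank k V := by
    obtain ⟨v, hv⟩ : ∃ v, v ∉ H := by
      by_contra! hh; exact hH.1 (by ext; simp [hh])
    have h3 : H ⊔ Submodule.span k {v} = ⊤ := by
      apply hH.2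
      refine lt_of_le_of_ne le_sup_left ?_
      intro h
      apply hv
      rw [h]
      exact Submodule.mem_sup_right (Submodule.mem_span_singleton_self v)
    have h4 := Submodule.finrank_add_le_finrank_add_finrank H (Submodule.span k {v})
    rw [h3, finrank_top] at h4
    have h5 := finrank_span_le_card (R := k) ({v} : Set V)
    simp at h5
    have h6 := Submodule.finrank_lt hH.1
    omega
  set q : ℤ := (Nat.card k : ℤ) with hq
  have hq2 : 2 ≤ q := by
    have : 1 < Nat.card k := Finite.one_lt_card
    omega
  have gen : ∀ (G : Submodule k V), finrank k G + 1 = finrank k V → ∀ U : Submodule k V,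
      2 ≤ finrank k U → q ∣ S ρ G (F.e U) + (1 - ind U v0) := by
    intro G hG U hU
    rw [F.S_e]
    have h7 : U ⊓ G ≠ ⊥ := by
      intro h
      have := Submodule.finrank_sup_add_finrank_inf_eq U G
      rw [h, finrank_bot] at this
      have := Submodule.finrank_le (U ⊔ G)
      omega
    have h8 : G ≠ ⊥ := by
      rintro rfl
      rw [finrank_bot] at hG; omega
    obtain ⟨a, ha⟩ := dvd_card h7
    obtain ⟨b, hb⟩ := dvd_card h8
    rw [ha, hb]
    exact ⟨a - ind U v0 * b, by rw [hq]; ring⟩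
  have hH'2 : finrank k H' + 1 = finrank k V := by omega
  let L : N →+ ℤ := S ρ H - S ρ H'
  have hL : ∀ v : V, v ≠ 0 → q ∣ L (Φ (F.e (Submodule.span k {v}))) := by
    intro v hv
    obtain ⟨e1, e2⟩ := hf v hv
    rw [e1]
    have := dvd_sub (gen H hcoatom _ e2) (gen H' hH'2 _ e2)
    simpa [L] using this
  have hL2 : ∀ h, q ∣ L (Φ h) := by
    intro h
    have h9 : q ∣ L (Φ ((q - 1) • h)) := by
      rw [hq, F.smul_eq_sum h, map_sum, map_sum]
      apply Finset.dvd_sum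
      intro v hv
      rw [map_zsmul, map_zsmul, smul_eq_mul]
      exact Dvd.dvd.mul_left (hL v (by simpa using hv)) _
    rw [map_zsmul, map_zsmul, smul_eq_mul] at h9
    have : L (Φ h) = q * L (Φ h) - (q - 1) * L (Φ h) := by ring
    rw [this]
    exact dvd_sub (dvd_mul_right _ _) h9
  have h10 := hL2 (Φ.symm (F.e l))
  rw [AddEquiv.apply_symm_apply] at h10
  change q ∣ S ρ H (F.e l) - S ρ H' (F.e l) at h10
  rw [F.S_e, F.S_e] at h10
  have h11 : l ⊓ H = l := inf_eq_left.2 hlH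
  have h12 : l ⊓ H' = ⊥ := hH'.inf_eq_bot
  have hne : ∀ G : Submodule k V, finrank k G + 1 = finrank k V → G ≠ ⊥ := by
    rintro G hG rfl
    rw [finrank_bot] at hG; omega
  obtain ⟨a, ha⟩ := dvd_card (hne H hcoatom)
  obtain ⟨b, hb⟩ := dvd_card (hne H' hH'2)
  obtain ⟨c, hc⟩ := dvd_card (U := l) (by rw [hl]; simpa using hv0)
  rw [h11, h12, ha, hb, hc] at h10
  have h13 : (Nat.card (⊥ : Submodule k V) : ℤ) = 1 := by simp
  rw [h13] at h10
  obtain ⟨d, hd⟩ := h10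
  have : q ∣ 1 := ⟨c - ind l v0 * a + ind l v0 * b - d, by
    rw [← hq] at hd; linear_combination (-1 : ℤ) * hd⟩
  have := Int.le_of_dvd one_pos this
  omega

end modq

open Module in
theorem lines [Fintype k] [FiniteDimensional k V] (h2 : 2 ≤ finrank k V) (Φ : N ≃+ N)
    (hΦ : ∀ h, IsNorm k (ρ (Φ h)) ↔ IsNorm k (ρ h)) (w : V) (hw : w ≠ 0) :
    ∃ w' : V, w' ≠ 0 ∧ Φ (F.e (Submodule.span k {w})) = F.e (Submodule.span k {w'}) := by
  classical
  have : Finite V := Module.finite_of_finite k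
  have : Fintype V := Fintype.ofFinite V
  have hΦ' : ∀ h, IsNorm k (ρ (Φ.symm h)) ↔ IsNorm k (ρ h) := by
    intro h
    rw [← hΦ, AddEquiv.apply_symm_apply]
  have hp : ∀ U : Submodule k V, ∃ U', Proper U → Proper U' ∧ Φ (F.e U) = F.e U' := by
    intro U
    by_cases hU : Proper U
    · obtain ⟨U', h⟩ := F.exists_perm Φ hΦ hU
      exact ⟨U', fun _ => h⟩
    · exact ⟨⊥, fun h => absurd h hU⟩
  choose f hf using hp
  have hsurj : ∀ U', Proper U' → ∃ U, Proper U ∧ f U = U' := by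
    intro U' hU'
    obtain ⟨U, hU, h⟩ := F.exists_perm Φ.symm hΦ' hU'
    refine ⟨U, hU, F.e_inj (hf U hU).1 hU' ?_⟩
    rw [← (hf U hU).2, ← h]; simp
  have hcomp : ∀ U U', Proper U → Proper U' → ((f U ≤ f U' ∨ f U' ≤ f U) ↔ (U ≤ U' ∨ U' ≤ U)) := by
    intro U U' hU hU'
    rw [← F.norm_add_iff, ← F.norm_add_iff, ← (hf U hU).2, ← (hf U' hU').2, ← map_add, hΦ]
  have hinj : ∀ U U', Proper U → Proper U' → f U = f U' → U = U' := by
    intro U U' hU hU' h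
    apply F.e_inj hU hU'
    apply Φ.injective
    rw [(hf U hU).2, (hf U' hU').2, h]
  -- lines
  have hline : ∀ v : V, v ≠ 0 → finrank k (Submodule.span k {v}) = 1 :=
    fun v hv => finrank_span_singleton hv
  have hlp : ∀ v : V, v ≠ 0 → Proper (Submodule.span k {v}) := by
    intro v hv
    refine ⟨by simpa using hv, fun h => ?_⟩
    have := hline v hv
    rw [h, finrank_top] at this; omega
  have hatom : ∀ v : V, v ≠ 0 → ∀ U, Proper U → U ≤ Submodule.span k {v} →
      U = Submodule.span k {v} := by
    intro v hv U hU hle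
    apply Submodule.eq_of_le_of_finrank_le hle
    rw [hline v hv, Nat.one_le_iff_ne_zero, ne_eq, Submodule.finrank_eq_zero]
    exact hU.1
  have hext : ∀ v : V, v ≠ 0 → ∀ X Y, Proper X → Proper Y → X < f (Submodule.span k {v}) →
      f (Submodule.span k {v}) < Y → False := by
    intro v hv X Y hX hY hXl hYl
    set l := Submodule.span k {v} with hl
    obtain ⟨A, hA, rfl⟩ := hsurj X hX
    obtain ⟨B, hB, rfl⟩ := hsurj Y hY
    have up : ∀ A, Proper A → A ≠ l → (f A ≤ f l ∨ f l ≤ f A) → l < A := by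
      intro A hA hne hc
      rcases (hcomp A l hA (hlp v hv)).1 hc with h | h
      · exact absurd (hatom v hv A hA h) hne
      · exact lt_of_le_of_ne h hne.symm
    have hlA : l < A := up A hA (by rintro rfl; exact lt_irrefl _ hXl) (Or.inl hXl.le)
    have hlB : l < B := up B hB (by rintro rfl; exact lt_irrefl _ hYl) (Or.inr hYl.le)
    obtain ⟨w, hwA, hwB⟩ : ∃ w, w ∉ A ∧ w ∉ B := by
      obtain ⟨a, ha⟩ : ∃ a, a ∉ A := by
        by_contra! hh; exact hA.2 (by ext; simp [hh])
      obtain ⟨b, hb⟩ : ∃ a, a ∉ B := by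
        by_contra! hh; exact hB.2 (by ext; simp [hh])
      by_cases h1 : a ∈ B
      · by_cases h2 : b ∈ A
        · refine ⟨a + b, ?_, ?_⟩
          · intro h; exact ha ((A.add_mem_iff_left h2).1 h)
          · intro h; exact hb ((B.add_mem_iff_right h1).1 h)
        · exact ⟨b, h2, hb⟩
      · exact ⟨a, ha, h1⟩
    set C := l ⊔ Submodule.span k {w} with hC
    have hwC : w ∈ C := Submodule.mem_sup_right (Submodule.mem_span_singleton_self w)
    have hC2 : finrank k C ≤ 2 := by
      have h4 := Submodule.finrank_add_le_finrank_add_finrank l (Submodule.span k {w})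
      have h5 := finrank_span_le_card (R := k) ({w} : Set V)
      simp at h5
      have h6 := hline v hv
      rw [← hl] at h6
      rw [← hC] at h4
      omega
    have big : ∀ A, l < A → 2 ≤ finrank k A := by
      intro A h
      have := Submodule.finrank_lt_finrank_of_lt h
      rw [hline v hv] at this
      omega
    have hCp : Proper C := by
      constructor
      · intro h
        have : l ≤ C := le_sup_left
        rw [h, le_bot_iff] at this
        exact (hlp v hv).1 this
      · intro h
        rw [h, finrank_top] at hC2
        have h1 := big A hlA
        have h3 := Submodule.finrank_lt hA.2
        omega
    have inc : ∀ A, l < A → w ∉ A → ¬ (C ≤ A ∨ A ≤ C) := by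
      rintro A hA hwA (h | h)
      · exact hwA (h hwC)
      · have : A = C := Submodule.eq_of_le_of_finrank_le h (by have := big A hA; omega)
        rw [this] at hwA; exact hwA hwC
    have i1 := mt (hcomp C A hCp hA).1 (inc A hlA hwA)
    have i2 := mt (hcomp C B hCp hB).1 (inc B hlB hwB)
    rcases (hcomp C l hCp (hlp v hv)).2 (Or.inr le_sup_left) with h | h
    · exact i2 (Or.inl (h.trans hYl.le))
    · exact i1 (Or.inr (hXl.le.trans h))
  -- if some line goes to a non-atom, all do
  by_cases hall : ∃ v : V, v ≠ 0 ∧ finrank k (f (Submodule.span k {v})) = 1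
  · obtain ⟨v, hv, hv1⟩ := hall
    suffices h : finrank k (f (Submodule.span k {w})) = 1 by
      obtain ⟨w', hw'⟩ := finrank_eq_one_iff'.1 h
      refine ⟨w', by simpa using hw'.1, ?_⟩
      rw [(hf _ (hlp w hw)).2]
      congr 1
      have h1 : (w' : V) ≠ 0 := by simpa using hw'.1
      symm
      apply Submodule.eq_of_le_of_finrank_le
      · rw [Submodule.span_singleton_le_iff_mem]; exact w'.2
      · rw [h, hline _ h1]
    by_contra hw1
    set l := Submodule.span k {v} with hl
    set m := Submodule.span k {w} with hm
    have hlm : l ≠ m := by intro h; rw [h] at hv1; exact hw1 hv1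
    have hfl := hf l (hlp v hv)
    have hfm := hf m (hlp w hw)
    have hfm2 : 2 ≤ finrank k (f m) := by
      have : finrank k (f m) ≠ 0 := by
        rw [ne_eq, Submodule.finrank_eq_zero]; exact hfm.1.1
      omega
    have h3 : 3 ≤ finrank k V := by
      have := Submodule.finrank_lt hfm.1.2
      omega
    -- f m contains a smaller proper subspace
    have hX : ∃ X, Proper X ∧ X < f m := by
      obtain ⟨x, hx, hx0⟩ := (Submodule.ne_bot_iff _).1 hfm.1.1
      refine ⟨Submodule.span k {x}, hlp x hx0, lt_of_le_of_ne ?_ ?_⟩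
      · rw [Submodule.span_singleton_le_iff_mem]; exact hx
      · intro h
        rw [← h, hline x hx0] at hfm2; omega
    obtain ⟨X, hXp, hXm⟩ := hX
    set C := l ⊔ m with hC
    have hCp : Proper C := by
      constructor
      · intro h
        have : l ≤ C := le_sup_left
        rw [h, le_bot_iff] at this
        exact (hlp v hv).1 this
      · intro h
        have h4 := Submodule.finrank_add_le_finrank_add_finrank l m
        rw [← hC, h, finrank_top, hline v hv, hline w hw] at h4
        omega
    have hCl : C ≠ l := by
      intro h
      exact hlm (hatom v hv m (hlp w hw) ((show m ≤ C from le_sup_right).trans h.le)).symm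
    have hCm : C ≠ m := by
      intro h
      exact hlm (hatom w hw l (hlp v hv) ((show l ≤ C from le_sup_left).trans h.le))
    have c1 := (hcomp C l hCp (hlp v hv)).2 (Or.inr le_sup_left)
    have c2 := (hcomp C m hCp (hlp w hw)).2 (Or.inr le_sup_right)
    have d1 : f l ≤ f C := by
      rcases c1 with h | h
      · have : f C = f l := by
          apply Submodule.eq_of_le_of_finrank_le h
          rw [hv1, Nat.one_le_iff_ne_zero, ne_eq, Submodule.finrank_eq_zero]
          exact (hf C hCp).1.1
        exact this.ge
      · exact h
    have d2 : f C ≤ f m := by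
      rcases c2 with h | h
      · exact h
      · rcases h.eq_or_lt with h' | h'
        · exact h'.ge
        · exact (hext w hw X (f C) hXp (hf C hCp).1 hXm h').elim
    rcases (hcomp l m (hlp v hv) (hlp w hw)).1 (Or.inl (d1.trans d2)) with h | h
    · exact hlm (hatom w hw l (hlp v hv) h)
    · exact hlm (hatom v hv m (hlp w hw) h).symm
  · push Not at hall
    exfalso
    refine F.modq_contra h2 Φ f ?_
    intro v hv
    refine ⟨(hf _ (hlp v hv)).2, ?_⟩
    have h1 := hall v hv
    have : finrank k (f (Submodule.span k {v})) ≠ 0 := by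
      rw [ne_eq, Submodule.finrank_eq_zero]; exact (hf _ (hlp v hv)).1.1
    omega

end Frame

end Comb2


open MvPolynomial Module

section Alg1

variable {k : Type*} [Field k] {n : ℕ}

/-- the linear form with coefficients `c` -/
noncomputable def lin (c : Fin n → k) : MvPolynomial (Fin n) k :=
  ∑ i, MvPolynomial.C (c i) * MvPolynomial.X i

lemma lin_add (u v : Fin n → k) : lin (u + v) = lin u + lin v := by
  simp [lin, add_mul, Finset.sum_add_distrib]

lemma lin_smul (c : k) (v : Fin n → k) : lin (c • v) = C c * lin v := by
  simp [lin, Finset.mul_sum, mul_assoc]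

@[simp] lemma lin_zero : lin (0 : Fin n → k) = 0 := by simp [lin]

lemma lin_single (i : Fin n) : lin (Pi.single i (1 : k)) = X i := by
  classical
  unfold lin
  rw [Finset.sum_eq_single i]
  · simp
  · intro j _ hj; simp [hj]
  · simp

lemma lin_hom (v : Fin n → k) : (lin v).IsHomogeneous 1 := by
  unfold lin
  apply IsHomogeneous.sum
  intro i _
  have := (isHomogeneous_C (Fin n) (v i)).mul (isHomogeneous_X k i)
  simpa using this

lemma coeff_lin (v : Fin n → k) (i : Fin n) : coeff (Finsupp.single i 1) (lin v) = v i := by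
  classical
  unfold lin
  rw [coeff_sum, Finset.sum_eq_single i]
  · simp [coeff_C_mul]
  · intro j _ hj
    rw [coeff_C_mul, coeff_X']
    simp [Finsupp.single_left_inj, hj]
  · simp

lemma lin_injective : Function.Injective (lin : (Fin n → k) → MvPolynomial (Fin n) k) := by
  intro u v h
  funext i
  rw [← coeff_lin u i, h, coeff_lin]

lemma lin_ne_zero {v : Fin n → k} (hv : v ≠ 0) : lin v ≠ 0 := by
  rw [← lin_zero]; exact fun h => hv (lin_injective h)

lemma lin_prime {v : Fin n → k} (hv : v ≠ 0) : Prime (lin v) := by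
  rw [← irreducible_iff_prime]
  have hd : (lin v).totalDegree = 1 := (lin_hom v).totalDegree (lin_ne_zero hv)
  rw [irreducible_iff]
  constructor
  · intro h
    rw [isUnit_iff_totalDegree_of_isReduced] at h
    omega
  · intro a b hab
    have h0 := lin_ne_zero hv
    have ha : a ≠ 0 := by rintro rfl; simp at hab; exact h0 hab
    have hb : b ≠ 0 := by rintro rfl; simp at hab; exact h0 hab
    rw [hab, totalDegree_mul_of_isDomain ha hb] at hd
    have key : ∀ p : MvPolynomial (Fin n) k, p ≠ 0 → p.totalDegree = 0 → IsUnit p := by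
      intro p hp h
      rw [totalDegree_eq_zero_iff_eq_C] at h
      rw [h]
      apply IsUnit.map
      rw [isUnit_iff_ne_zero]
      intro hc
      rw [hc] at h
      exact hp (by rw [h, C_0])
    rcases Nat.eq_zero_or_pos a.totalDegree with h | h
    · exact Or.inl (key a ha h)
    · exact Or.inr (key b hb (by omega))

/-- nonzero vectors -/
noncomputable def nzv (k : Type*) [Field k] [Fintype k] (n : ℕ) : Finset (Fin n → k) :=
  by classical exact Finset.univ.filter (fun v => v ≠ 0)

/-- the product of all linear forms -/
noncomputable def FF (k : Type*) [Field k] [Fintype k] (n : ℕ) : MvPolynomial (Fin n) k :=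
  ∏ v ∈ nzv k n, lin v

variable [Fintype k]

lemma mem_nzv {v : Fin n → k} : v ∈ nzv k n ↔ v ≠ 0 := by simp [nzv]

lemma FF_hom : (FF k n).IsHomogeneous (nzv k n).card := by
  have := IsHomogeneous.prod (nzv k n) (fun v => lin v) (fun _ => 1) (fun v _ => lin_hom v)
  simpa [FF] using this

lemma FF_ne_zero : FF k n ≠ 0 := by
  unfold FF
  rw [Finset.prod_ne_zero_iff]
  intro v hv
  exact lin_ne_zero (mem_nzv.1 hv)

lemma lin_dvd_FF {v : Fin n → k} (hv : v ≠ 0) : lin v ∣ FF k n :=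
  Finset.dvd_prod_of_mem _ (mem_nzv.2 hv)

/-- products of linear forms indexed by projective points -/
def IsLP (s : MvPolynomial (Fin n) k) : Prop :=
  ∃ c : k, c ≠ 0 ∧ ∃ e : Projectivization k (Fin n → k) →₀ ℕ, s = C c * e.prod (fun r m => lin r.rep ^ m)

omit [Fintype k] in
lemma IsLP.one : IsLP (1 : MvPolynomial (Fin n) k) := ⟨1, one_ne_zero, 0, by simp⟩

omit [Fintype k] in
lemma IsLP.unit {s : MvPolynomial (Fin n) k} (h : IsUnit s) : IsLP s := by
  rw [isUnit_iff_totalDegree_of_isReduced] at h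
  obtain ⟨h1, h2⟩ := h
  rw [totalDegree_eq_zero_iff_eq_C] at h2
  exact ⟨_, h1.ne_zero, 0, by simpa using h2⟩

omit [Fintype k] in
lemma IsLP.mul {s : MvPolynomial (Fin n) k} (h : IsLP s) {v : Fin n → k} (hv : v ≠ 0) :
    IsLP (lin v * s) := by
  classical
  obtain ⟨c, hc, e, rfl⟩ := h
  obtain ⟨a, ha⟩ := Projectivization.exists_smul_eq_mk_rep k v hv
  refine ⟨((a⁻¹ : kˣ) : k) * c, mul_ne_zero (Units.ne_zero _) hc,
    Finsupp.single (Projectivization.mk k v hv) 1 + e, ?_⟩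
  rw [Finsupp.prod_add_index' (by simp) (by simp [pow_add]), Finsupp.prod_single_index (by simp),
    ← ha, pow_one, Units.smul_def, lin_smul]
  have : (C ((a⁻¹ : kˣ) : k) * C (a : k) : MvPolynomial (Fin n) k) = 1 := by
    rw [← C_mul]; simp
  rw [C_mul]
  linear_combination (-(C c * lin v * e.prod fun r m => lin r.rep ^ m)) * this

omit [Fintype k] in
lemma IsLP.of_dvd (m : Multiset (Fin n → k)) (hm : ∀ v ∈ m, v ≠ 0) :
    ∀ s : MvPolynomial (Fin n) k, s ∣ (m.map lin).prod → IsLP s := by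
  induction m using Multiset.induction_on with
  | empty =>
    intro s hs
    exact IsLP.unit (isUnit_of_dvd_one (by simpa using hs))
  | cons v m ih =>
    intro s hs
    have hv : v ≠ 0 := hm v (Multiset.mem_cons_self v m)
    have ih' := ih (fun u hu => hm u (Multiset.mem_cons_of_mem hu))
    rw [Multiset.map_cons, Multiset.prod_cons] at hs
    obtain ⟨t, ht⟩ := hs
    have hp := lin_prime hv
    rcases hp.dvd_or_dvd (a := s) (b := t) ⟨_, ht.symm⟩ with ⟨s', rfl⟩ | ⟨t', rfl⟩
    · refine IsLP.mul (ih' s' ⟨t, ?_⟩) hv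
      apply mul_left_cancel₀ hp.ne_zero
      rw [ht]; ring
    · refine ih' s ⟨t', ?_⟩
      apply mul_left_cancel₀ hp.ne_zero
      rw [ht]; ring

lemma IsLP.of_dvd_FF_pow {s : MvPolynomial (Fin n) k} (m : ℕ) (h : s ∣ FF k n ^ m) : IsLP s := by
  apply IsLP.of_dvd (m • (nzv k n).val)
  · intro v hv
    exact mem_nzv.1 (Multiset.mem_of_mem_nsmul hv)
  · rw [Multiset.map_nsmul, Multiset.prod_nsmul]
    exact h

omit [Fintype k] in
lemma prod_hom (e : Projectivization k (Fin n → k) →₀ ℕ) (c : k) :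
    (C c * e.prod (fun r m => lin r.rep ^ m)).IsHomogeneous (e.sum fun _ m => m) := by
  have h1 : (e.prod (fun r m => lin r.rep ^ m)).IsHomogeneous (e.sum fun _ m => m) := by
    apply IsHomogeneous.prod
    intro r _
    have := (lin_hom r.rep).pow (e r)
    simpa using this
  have := (isHomogeneous_C (Fin n) c).mul h1
  simpa using this

end Alg1


open MvPolynomial Module

section Alg2

/-- `j : A → B` identifies `A` with the degree zero part of `B = S[1/F]`. -/
structure RS {k : Type*} [Field k] [Fintype k] {n : ℕ} {A B : Type*} [CommRing A] [CommRing B]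
    [Algebra (MvPolynomial (Fin n) k) B] (j : A →+* B) : Prop where
  inj : Function.Injective j
  dom : IsDomain B
  away : IsLocalization.Away (FF k n) B
  A1 : ∀ a, ∃ (m : ℕ) (s : MvPolynomial (Fin n) k), s.IsHomogeneous (m * (nzv k n).card) ∧
    j a * algebraMap _ B (FF k n) ^ m = algebraMap _ B s
  A2 : ∀ (m : ℕ) (s : MvPolynomial (Fin n) k), s.IsHomogeneous (m * (nzv k n).card) →
    ∃ a, j a * algebraMap _ B (FF k n) ^ m = algebraMap _ B s

namespace RS

variable {k : Type*} [Field k] [Fintype k] {n : ℕ} {A B : Type*} [CommRing A] [CommRing B]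
    [Algebra (MvPolynomial (Fin n) k) B] {j : A →+* B} (R : RS (k := k) (n := n) j)

include R

lemma ι_inj : Function.Injective (algebraMap (MvPolynomial (Fin n) k) B) := by
  have := R.away
  exact IsLocalization.injective B (M := Submonoid.powers (FF k n))
    (powers_le_nonZeroDivisors_of_noZeroDivisors FF_ne_zero)

lemma isUnit_FF : IsUnit (algebraMap (MvPolynomial (Fin n) k) B (FF k n)) := by
  have := R.away
  exact IsLocalization.Away.algebraMap_isUnit (FF k n)

lemma isUnit_lin {v : Fin n → k} (hv : v ≠ 0) :
    IsUnit (algebraMap (MvPolynomial (Fin n) k) B (lin v)) :=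
  isUnit_of_dvd_unit (map_dvd _ (lin_dvd_FF hv)) R.isUnit_FF

omit R in
lemma isUnit_C {c : k} (hc : c ≠ 0) :
    IsUnit (algebraMap (MvPolynomial (Fin n) k) B (C c)) :=
  ((isUnit_iff_ne_zero.2 hc).map (C : k →+* MvPolynomial (Fin n) k)).map _

open Classical in
/-- linear form as a unit of `B` -/
noncomputable def L (v : Fin n → k) : Bˣ := if h : v = 0 then 1 else (R.isUnit_lin h).unit

omit R in
open Classical in
/-- constant as a unit of `B` -/
noncomputable def K (n : ℕ) (B : Type*) [CommRing B] [Algebra (MvPolynomial (Fin n) k) B]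
    (c : k) : Bˣ :=
  if h : c = 0 then 1 else (isUnit_C (n := n) (B := B) h).unit

lemma L_val {v : Fin n → k} (hv : v ≠ 0) : (R.L v : B) = algebraMap _ B (lin v) := by
  simp [L, hv]

omit R in
lemma K_val {c : k} (hc : c ≠ 0) :
    (K n B c : B) = algebraMap (MvPolynomial (Fin n) k) B (C c) := by
  simp [K, hc]

omit R in
lemma K_mul {c d : k} (hc : c ≠ 0) (hd : d ≠ 0) : K n B (c * d) = K n B c * K n B d := by
  ext
  rw [Units.val_mul, K_val hc, K_val hd, K_val (mul_ne_zero hc hd), C_mul, map_mul]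

lemma L_smul {c : k} (hc : c ≠ 0) {v : Fin n → k} (hv : v ≠ 0) :
    R.L (c • v) = K n B c * R.L v := by
  ext
  rw [Units.val_mul, K_val hc, R.L_val hv, R.L_val (smul_ne_zero hc hv), lin_smul, map_mul]

lemma exists_ratio {u v : Fin n → k} (hu : u ≠ 0) (hv : v ≠ 0) :
    ∃ a : Aˣ, Units.map (j : A →* B) a = R.L u / R.L v := by
  have key : ∀ u v : Fin n → k, u ≠ 0 → v ≠ 0 → ∃ a : A, j a = (R.L u / R.L v : Bˣ) := by
    intro u v hu hv
    obtain ⟨t, ht⟩ := lin_dvd_FF hv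
    have hN : t.IsHomogeneous ((nzv k n).card - 1) := by
      classical
      have h1 : t = ∏ w ∈ (nzv k n).erase v, lin w := by
        apply mul_left_cancel₀ (lin_ne_zero hv)
        rw [← ht, FF, Finset.mul_prod_erase _ _ (mem_nzv.2 hv)]
      rw [h1]
      have := IsHomogeneous.prod ((nzv k n).erase v) (fun v => lin v) (fun _ => 1)
        (fun v _ => lin_hom v)
      simpa [Finset.card_erase_of_mem (mem_nzv.2 hv)] using this
    have hpos : 0 < (nzv k n).card := Finset.card_pos.2 ⟨v, mem_nzv.2 hv⟩
    obtain ⟨a, ha⟩ := R.A2 1 (lin u * t) (by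
      have := (lin_hom u).mul hN
      rwa [show 1 + ((nzv k n).card - 1) = 1 * (nzv k n).card by omega] at this)
    refine ⟨a, ?_⟩
    have h2 : j a * algebraMap _ B (FF k n) = ((R.L u / R.L v : Bˣ) : B) * algebraMap _ B (FF k n) := by
      rw [pow_one] at ha
      rw [ha, ht, map_mul, map_mul, ← R.L_val hu, ← R.L_val hv, div_eq_mul_inv, Units.val_mul]
      have := (R.L v).inv_mul
      linear_combination (-(R.L u : B) * algebraMap _ B t) * this
    exact R.isUnit_FF.mul_left_injective h2
  obtain ⟨a, ha⟩ := key u v hu hv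
  obtain ⟨b, hb⟩ := key v u hv hu
  have h1 : a * b = 1 := by
    apply R.inj
    rw [map_mul, ha, hb, map_one, ← Units.val_mul]; simp
  exact ⟨⟨a, b, h1, by rw [mul_comm, h1]⟩, by ext; simp [ha]⟩

lemma exists_const {c : k} (hc : c ≠ 0) : ∃ a : Aˣ, Units.map (j : A →* B) a = K n B c := by
  have key : ∀ c : k, ∃ a : A, j a = algebraMap (MvPolynomial (Fin n) k) B (C c) := by
    intro c
    obtain ⟨a, ha⟩ := R.A2 0 (C c) (by simpa using isHomogeneous_C (Fin n) c)
    exact ⟨a, by simpa using ha⟩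
  obtain ⟨a, ha⟩ := key c
  obtain ⟨b, hb⟩ := key c⁻¹
  have h1 : a * b = 1 := by
    apply R.inj
    rw [map_mul, ha, hb, map_one, ← map_mul, ← C_mul, mul_inv_cancel₀ hc]; simp
  exact ⟨⟨a, b, h1, by rw [mul_comm, h1]⟩, by ext; simp [ha, K_val hc]⟩

lemma unit_form [Fintype (Projectivization k (Fin n → k))] (u : Aˣ) :
    ∃ c : k, c ≠ 0 ∧ ∃ d : Projectivization k (Fin n → k) → ℤ, ∑ r, d r = 0 ∧
      Units.map (j : A →* B) u = K n B c * ∏ r, R.L r.rep ^ d r := by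
  obtain ⟨m, s, hs, h1⟩ := R.A1 u
  obtain ⟨m', s', -, h2⟩ := R.A1 ((u⁻¹ : Aˣ) : A)
  have h3 : s * s' = FF k n ^ (m + m') := by
    apply R.ι_inj
    rw [map_mul, ← h1, ← h2, map_pow, pow_add]
    have : j u * j ((u⁻¹ : Aˣ) : A) = 1 := by rw [← map_mul]; simp
    linear_combination (algebraMap _ B (FF k n) ^ m * algebraMap _ B (FF k n) ^ m') * this
  obtain ⟨c, hc, e, he⟩ := IsLP.of_dvd_FF_pow (m + m') ⟨s', h3.symm⟩
  obtain ⟨c0, hc0, f, hf⟩ := IsLP.of_dvd_FF_pow (s := FF k n) 1 (by simp)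
  have hs0 : s ≠ 0 := by
    rintro rfl
    rw [zero_mul] at h3
    exact pow_ne_zero _ FF_ne_zero h3.symm
  have d1 : e.sum (fun _ m => m) = m * (nzv k n).card :=
    (he ▸ prod_hom e c : s.IsHomogeneous _).inj_right hs hs0
  have d2 : f.sum (fun _ m => m) = (nzv k n).card := by
    have := prod_hom f c0
    rw [← hf] at this
    exact this.inj_right FF_hom FF_ne_zero
  rw [Finsupp.sum_fintype _ _ (by simp)] at d1 d2
  rw [Finsupp.prod_fintype _ _ (by simp)] at he hf
  have h4 : Units.map (j : A →* B) u * (K n B c0 * ∏ r, R.L r.rep ^ f r) ^ m =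
      K n B c * ∏ r, R.L r.rep ^ e r := by
    ext
    simp only [Units.val_mul, Units.val_pow_eq_pow_val, Units.coe_prod, Units.coe_map,
      MonoidHom.coe_coe, K_val hc, K_val hc0, fun r : Projectivization k (Fin n → k) =>
        R.L_val r.rep_nonzero]
    simp only [← map_pow, ← map_prod, ← map_mul]
    rw [← hf, ← he, map_pow]
    exact h1
  have hK : ∀ m : ℕ, K n B (c0 ^ m) = K n B c0 ^ m := by
    intro m
    ext
    simp [K_val hc0, K_val (pow_ne_zero m hc0)]
  refine ⟨c * (c0 ^ m)⁻¹, mul_ne_zero hc (inv_ne_zero (pow_ne_zero _ hc0)),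
    fun r => e r - m * f r, ?_, ?_⟩
  · rw [Finset.sum_sub_distrib, ← Finset.mul_sum]
    have d1' : (∑ r, (e r : ℤ)) = m * (nzv k n).card := by exact_mod_cast d1
    have d2' : (∑ r, (f r : ℤ)) = (nzv k n).card := by exact_mod_cast d2
    rw [d1', d2', sub_self]
  · rw [← eq_div_iff_mul_eq'] at h4
    rw [h4]
    have h5 : K n B (c * (c0 ^ m)⁻¹) = K n B c / K n B c0 ^ m := by
      rw [eq_div_iff_mul_eq', ← hK, ← K_mul (mul_ne_zero hc (inv_ne_zero (pow_ne_zero _ hc0)))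
        (pow_ne_zero _ hc0), mul_assoc, inv_mul_cancel₀ (pow_ne_zero _ hc0), mul_one]
    rw [h5, mul_pow, mul_div_mul_comm, ← Finset.prod_pow, ← Finset.prod_div_distrib]
    congr 2
    funext r
    rw [zpow_sub, ← pow_mul, zpow_natCast, div_eq_mul_inv, mul_comm (f r) m]
    congr 2

end RS

end Alg2


open MvPolynomial Module

section Alg3

variable {k : Type*} [Field k] {n : ℕ}

lemma IsNorm.exists_le_sum {V : Type*} [AddCommGroup V] [Module k V] {α : V → ℤ}
    (h : IsNorm k α) {ι : Type*} (s : Finset ι) (f : ι → V) (hs : ∑ i ∈ s, f i ≠ 0) :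
    ∃ i ∈ s, f i ≠ 0 ∧ α (f i) ≤ α (∑ i ∈ s, f i) := by
  classical
  induction s using Finset.induction_on with
  | empty => simp at hs
  | insert a s ha ih =>
    rw [Finset.sum_insert ha] at hs ⊢
    by_cases h1 : f a = 0
    · rw [h1, zero_add] at hs ⊢
      obtain ⟨i, hi, h2⟩ := ih hs
      exact ⟨i, Finset.mem_insert_of_mem hi, h2⟩
    by_cases h2 : ∑ i ∈ s, f i = 0
    · rw [h2, add_zero] at hs ⊢
      exact ⟨a, Finset.mem_insert_self _ _, h1, le_rfl⟩
    have h3 := h.add _ _ h1 h2 hs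
    rcases min_le_iff.1 h3 with h4 | h4
    · exact ⟨a, Finset.mem_insert_self _ _, h1, h4⟩
    · obtain ⟨i, hi, h5, h6⟩ := ih h2
      exact ⟨i, Finset.mem_insert_of_mem hi, h5, h6.trans h4⟩

lemma exists_adapted [Finite k] {α : (Fin n → k) → ℤ} (h : IsNorm k α) :
    ∃ M : Matrix (Fin n) (Fin n) k, M.det ≠ 0 ∧ ∀ c : Fin n → k, c ≠ 0 →
      (∀ i, c i ≠ 0 → α (∑ j, c j • M j) ≤ α (M i)) ∧
      ∃ i, c i ≠ 0 ∧ α (∑ j, c j • M j) = α (M i) := by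
  classical
  have : Nonempty {M : Matrix (Fin n) (Fin n) k // M.det ≠ 0} := ⟨⟨1, by simp⟩⟩
  have : Finite (Matrix (Fin n) (Fin n) k) := inferInstanceAs (Finite (Fin n → Fin n → k))
  obtain ⟨⟨M, hM⟩, hmax⟩ := Finite.exists_max
    (fun M : {M : Matrix (Fin n) (Fin n) k // M.det ≠ 0} => ∑ i, α (M.1 i))
  refine ⟨M, hM, fun c hc => ?_⟩
  have h1 : ∀ i, c i ≠ 0 → α (∑ j, c j • M j) ≤ α (M i) := by
    intro i hi
    have h2 := hmax ⟨M.updateRow i (∑ j, c j • M j), by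
      rw [Matrix.det_updateRow_sum]; exact smul_ne_zero hi hM⟩
    simp only at h2
    rw [← Finset.add_sum_erase _ _ (Finset.mem_univ i),
      ← Finset.add_sum_erase _ (fun i => α (M i)) (Finset.mem_univ i)] at h2
    have h3 : ∑ x ∈ Finset.univ.erase i, α (M.updateRow i (∑ j, c j • M j) x) =
        ∑ x ∈ Finset.univ.erase i, α (M x) := by
      apply Finset.sum_congr rfl
      intro x hx
      rw [Matrix.updateRow_ne (Finset.ne_of_mem_erase hx)]
    rw [h3, Matrix.updateRow_self] at h2
    omega
  refine ⟨h1, ?_⟩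
  have hv : ∑ j, c j • M j ≠ 0 := by
    intro h0
    obtain ⟨i, hi⟩ := Function.ne_iff.1 hc
    have := Matrix.det_updateRow_sum M i c
    rw [h0, Matrix.det_eq_zero_of_row_eq_zero i (by simp)] at this
    exact smul_ne_zero hi hM this.symm
  obtain ⟨i, -, h4, h5⟩ := h.exists_le_sum Finset.univ (fun j => c j • M j) hv
  have hi : c i ≠ 0 := by rintro h0; simp [h0] at h4
  rw [h.smul _ _ hi] at h5
  exact ⟨i, hi, le_antisymm (h1 i hi) h5⟩

lemma exists_gauss [Finite k] {α : (Fin n → k) → ℤ} (h : IsNorm k α) :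
    ∃ E : MvPolynomial (Fin n) k →+* HahnSeries ℤ (FractionRing (MvPolynomial (Fin n) k)),
      ∀ v, v ≠ 0 → E (lin v) ≠ 0 ∧ (E (lin v)).order = α v := by
  classical
  obtain ⟨M, hM, hc⟩ := exists_adapted h
  set S := MvPolynomial (Fin n) k with hS
  set K := FractionRing S
  let E : S →+* HahnSeries ℤ K := eval₂Hom
    ((HahnSeries.C (Γ := ℤ)).comp ((algebraMap S K).comp (C : k →+* S)))
    (fun j => ∑ i, HahnSeries.single (α (M i)) (algebraMap S K (C (M⁻¹ j i) * X i)))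
  have hE : ∀ c : Fin n → k, E (lin (∑ j, c j • M j)) =
      ∑ i, HahnSeries.single (α (M i)) (algebraMap S K (C (c i) * X i)) := by
    intro c
    set v := ∑ j, c j • M j with hv
    have hcv : ∀ i, c i = ∑ j, v j * M⁻¹ j i := by
      intro i
      have h1 : v = Matrix.vecMul c M := by
        rw [hv, Matrix.vecMul_eq_sum]
      have h2 : Matrix.vecMul v M⁻¹ = c := by
        rw [h1, Matrix.vecMul_vecMul, Matrix.mul_nonsing_inv _ (isUnit_iff_ne_zero.2 hM),
          Matrix.vecMul_one]
      rw [← h2]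
      rfl
    unfold lin
    rw [map_sum]
    have h3 : ∀ j, E (C (v j) * X j) = ∑ i, HahnSeries.single (α (M i))
        (algebraMap S K (C (v j * M⁻¹ j i) * X i)) := by
      intro j
      rw [map_mul, show E (C (v j)) = HahnSeries.C (algebraMap S K (C (v j))) from
          eval₂Hom_C _ _ _,
        show E (X j) = ∑ i, HahnSeries.single (α (M i)) (algebraMap S K (C (M⁻¹ j i) * X i)) from
          eval₂Hom_X' _ _ _, Finset.mul_sum]
      apply Finset.sum_congr rfl
      intro i _
      simp only [RingHom.comp_apply, HahnSeries.C_apply, HahnSeries.single_mul_single, zero_add,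
        map_mul, mul_assoc]
    rw [Finset.sum_congr rfl fun j _ => h3 j, Finset.sum_comm]
    apply Finset.sum_congr rfl
    intro i _
    have hsum : ∀ f : Fin n → K, ∑ j, HahnSeries.single (α (M i)) (f j) =
        HahnSeries.single (α (M i)) (∑ j, f j) := fun f =>
      (map_sum (HahnSeries.single.addMonoidHom (α (M i))) f Finset.univ).symm
    rw [hsum, ← map_sum, ← Finset.sum_mul, ← map_sum, ← hcv]
  refine ⟨E, fun v hv => ?_⟩
  obtain ⟨c, rfl⟩ : ∃ c : Fin n → k, v = ∑ j, c j • M j := by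
    refine ⟨Matrix.vecMul v M⁻¹, ?_⟩
    rw [← Matrix.vecMul_eq_sum, Matrix.vecMul_vecMul,
      Matrix.nonsing_inv_mul _ (isUnit_iff_ne_zero.2 hM), Matrix.vecMul_one]
  have hc0 : c ≠ 0 := by rintro rfl; simp at hv
  obtain ⟨h1, i, hi, h2⟩ := hc c hc0
  rw [hE]
  set y := ∑ i, HahnSeries.single (α (M i)) (algebraMap S K (C (c i) * X i))
  have hy : ∀ b, y.coeff b = algebraMap S K (lin (fun i => if b = α (M i) then c i else 0)) := by
    intro b
    simp only [y, HahnSeries.coeff_sum, lin, map_sum]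
    apply Finset.sum_congr rfl
    intro i _
    rw [HahnSeries.coeff_single]
    split_ifs <;> simp
  have hne : y.coeff (α (∑ j, c j • M j)) ≠ 0 := by
    rw [hy, ne_eq, FaithfulSMul.algebraMap_eq_zero_iff]
    apply lin_ne_zero
    intro h0
    have := congrFun h0 i
    rw [if_pos h2] at this
    exact hi this
  have hy0 : y ≠ 0 := HahnSeries.ne_zero_of_coeff_ne_zero hne
  refine ⟨hy0, le_antisymm (HahnSeries.order_le_of_coeff_ne_zero hne) ?_⟩
  rw [HahnSeries.le_order_iff_forall hy0]
  intro b hb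
  rw [hy, FaithfulSMul.algebraMap_eq_zero_iff]
  convert lin_zero using 2
  funext l
  simp only [Pi.zero_apply, ite_eq_right_iff]
  intro hl
  by_contra hcl
  have := h1 l hcl
  omega

end Alg3


open MvPolynomial Module

section Alg4

/-- additive maps satisfying the ultrametric inequality -/
def Ultra {A : Type*} [CommRing A] (h : Additive Aˣ →+ ℤ) : Prop :=
  ∀ u u' u'' : Aˣ, (u : A) + u' = u'' →
    min (h (Additive.ofMul u)) (h (Additive.ofMul u')) ≤ h (Additive.ofMul u'')

namespace RS

variable {k : Type*} [Field k] [Fintype k] {n : ℕ} {A B : Type*} [CommRing A] [CommRing B]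
    [Algebra (MvPolynomial (Fin n) k) B] {j : A →+* B} (R : RS (k := k) (n := n) j)

lemma exists_val {α : (Fin n → k) → ℤ} (hα : IsNorm k α) :
    ∃ h : Additive Aˣ →+ ℤ, Ultra h ∧ ∀ u v : Fin n → k, u ≠ 0 → v ≠ 0 → ∀ a : Aˣ,
      Units.map (j : A →* B) a = R.L u / R.L v → h (Additive.ofMul a) = α u - α v := by
  obtain ⟨E, hE⟩ := exists_gauss hα
  have := R.away
  have hF : IsUnit (E (FF k n)) := by
    rw [isUnit_iff_ne_zero, FF, map_prod, Finset.prod_ne_zero_iff]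
    intro v hv
    exact (hE v (mem_nzv.1 hv)).1
  let E' : B →+* _ := IsLocalization.Away.lift (FF k n) hF
  have hE' : ∀ s, E' (algebraMap _ B s) = E s := fun s => IsLocalization.Away.lift_eq _ hF s
  have hne : ∀ u : Aˣ, E' (j u) ≠ 0 := fun u => ((u.isUnit.map j).map E').ne_zero
  refine ⟨{ toFun := fun u => (E' (j (u.toMul : Aˣ))).order, map_zero' := ?_, map_add' := ?_ },
    ?_, ?_⟩
  · simp
  · intro u v
    rw [toMul_add, Units.val_mul, map_mul, map_mul, HahnSeries.order_mul (hne _) (hne _)]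
  · intro u u' u'' huu
    change min (E' (j u)).order (E' (j u')).order ≤ (E' (j u'')).order
    rw [← huu, map_add, map_add]
    apply HahnSeries.min_order_le_order_add
    rw [← map_add, ← map_add, huu]
    exact hne _
  · intro u v hu hv a ha
    change (E' (j a)).order = _
    have h1 : j a * algebraMap _ B (lin v) = algebraMap _ B (lin u) := by
      rw [← R.L_val hu, ← R.L_val hv, show j a = ((Units.map (j : A →* B) a : Bˣ) : B) from rfl,
        ha, ← Units.val_mul]
      simp
    have h2 := congrArg (fun b => (E' b).order) h1
    simp only [map_mul, hE'] at h2
    rw [HahnSeries.order_mul (hne _) (hE v hv).1, (hE u hu).2, (hE v hv).2] at h2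
    omega

/-- the fundamental units -/
lemma exists_x {v0 : Fin n → k} (h0 : v0 ≠ 0) : ∃ x : (Fin n → k) → Aˣ, x 0 = 1 ∧
    ∀ v ≠ 0, Units.map (j : A →* B) (x v) = R.L v / R.L v0 := by
  classical
  have h : ∀ v : Fin n → k, ∃ a : Aˣ, (v = 0 → a = 1) ∧
      (v ≠ 0 → Units.map (j : A →* B) a = R.L v / R.L v0) := by
    intro v
    by_cases hv : v = 0
    · exact ⟨1, by simp [hv]⟩
    · obtain ⟨a, ha⟩ := R.exists_ratio hv h0
      exact ⟨a, by simp [hv, ha]⟩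
  choose x hx using h
  exact ⟨x, (hx 0).1 rfl, fun v hv => (hx v).2 hv⟩

/-- evaluation at fundamental units -/
def rho (x : (Fin n → k) → Aˣ) : (Additive Aˣ →+ ℤ) →+ ((Fin n → k) → ℤ) where
  toFun h v := h (Additive.ofMul (x v))
  map_zero' := rfl
  map_add' _ _ := rfl

include R in
lemma map_inj : Function.Injective (Units.map (j : A →* B)) := Units.map_injective R.inj

include R in
lemma kill_const {c : k} (hc : c ≠ 0) {a : Aˣ} (ha : Units.map (j : A →* B) a = K n B c)
    (h : Additive Aˣ →+ ℤ) : h (Additive.ofMul a) = 0 := by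
  have h1 : a ^ (Fintype.card k - 1) = 1 := by
    apply R.map_inj
    ext
    rw [map_pow, ha, Units.val_pow_eq_pow_val, K_val hc, ← map_pow, ← map_pow,
      FiniteField.pow_card_sub_one_eq_one c hc]
    simp
  have h2 := congrArg (fun b => h (Additive.ofMul b)) h1
  simp only [ofMul_pow, map_nsmul, ofMul_one, map_zero, nsmul_eq_mul] at h2
  rcases mul_eq_zero.1 h2 with h3 | h3
  · have : 1 < Fintype.card k := Fintype.one_lt_card
    have h4 : Fintype.card k - 1 = 0 := by exact_mod_cast h3
    omega
  · exact h3

section x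

variable {v0 : Fin n → k} (h0 : v0 ≠ 0) {x : (Fin n → k) → Aˣ} (hx0 : x 0 = 1)
  (hx : ∀ v ≠ 0, Units.map (j : A →* B) (x v) = R.L v / R.L v0)

include h0 hx in
lemma unit_form' [Fintype (Projectivization k (Fin n → k))] (u : Aˣ) :
    ∃ c : k, c ≠ 0 ∧ ∃ a : Aˣ, Units.map (j : A →* B) a = K n B c ∧
    ∃ d : Projectivization k (Fin n → k) → ℤ, ∑ r, d r = 0 ∧ u = a * ∏ r, x r.rep ^ d r := by
  obtain ⟨c, hc, d, hd, hu⟩ := R.unit_form u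
  obtain ⟨a, ha⟩ := R.exists_const hc
  refine ⟨c, hc, a, ha, d, hd, ?_⟩
  apply R.map_inj
  rw [hu, map_mul, ha, map_prod]
  congr 1
  have : ∀ r : Projectivization k (Fin n → k), Units.map (j : A →* B) (x r.rep ^ d r) =
      R.L r.rep ^ d r / R.L v0 ^ d r := by
    intro r
    rw [map_zpow, hx _ r.rep_nonzero, div_zpow]
  rw [Finset.prod_congr rfl fun r _ => this r, Finset.prod_div_distrib]
  have h2 : ∏ r, R.L v0 ^ d r = 1 := by
    have : ∀ s : Finset (Projectivization k (Fin n → k)),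
        ∏ r ∈ s, R.L v0 ^ d r = R.L v0 ^ ∑ r ∈ s, d r := by
      classical
      intro s
      induction s using Finset.induction_on with
      | empty => simp
      | insert a s ha ih => rw [Finset.prod_insert ha, Finset.sum_insert ha, zpow_add, ih]
    rw [this, hd, zpow_zero]
  rw [h2, div_one]

include h0 hx0 hx

lemma x_smul {c : k} (hc : c ≠ 0) {v : Fin n → k} (hv : v ≠ 0) :
    ∃ a : Aˣ, Units.map (j : A →* B) a = K n B c ∧ x (c • v) = a * x v := by
  obtain ⟨a, ha⟩ := R.exists_const hc
  refine ⟨a, ha, ?_⟩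
  apply R.map_inj
  rw [map_mul, ha, hx _ hv, hx _ (smul_ne_zero hc hv), R.L_smul hc hv, mul_div_assoc]

lemma x_add {u v : Fin n → k} (hu : u ≠ 0) (hv : v ≠ 0) (huv : u + v ≠ 0) :
    ((x u : Aˣ) : A) + x v = x (u + v) := by
  apply R.inj
  have h1 : ∀ w, w ≠ 0 → j (x w) = algebraMap _ B (lin w) * ((R.L v0)⁻¹ : Bˣ) := by
    intro w hw
    rw [show j (x w) = ((Units.map (j : A →* B) (x w) : Bˣ) : B) from rfl, hx w hw,
      div_eq_mul_inv, Units.val_mul, R.L_val hw]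
  rw [map_add, h1 u hu, h1 v hv, h1 _ huv, lin_add, map_add, add_mul]

lemma frame : Frame k (rho x) v0 where
  inj := by
    have : Finite (Projectivization k (Fin n → k)) := inferInstance
    have : Fintype (Projectivization k (Fin n → k)) := Fintype.ofFinite _
    intro h h' hh
    apply AddMonoidHom.ext
    intro u
    obtain ⟨c, hc, a, ha, d, -, hu⟩ := R.unit_form' h0 hx u.toMul
    have hv : ∀ v, h (Additive.ofMul (x v)) = h' (Additive.ofMul (x v)) := fun v => congrFun hh v
    have : u = Additive.ofMul (a * ∏ r, x r.rep ^ d r) := by rw [← hu]; rfl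
    rw [this, ofMul_mul, map_add, map_add, R.kill_const hc ha, R.kill_const hc ha, ofMul_prod,
      map_sum, map_sum]
    congr 1
    apply Finset.sum_congr rfl
    intro r _
    rw [ofMul_zpow, map_zsmul, map_zsmul, hv]
  zero h := by
    change h (Additive.ofMul (x 0)) = 0
    simp [hx0]
  base h := by
    change h (Additive.ofMul (x v0)) = 0
    have : x v0 = 1 := by
      apply R.map_inj
      rw [hx _ h0]; simp
    simp [this]
  base_ne := h0
  smul h c v hc := by
    change h (Additive.ofMul (x (c • v))) = h (Additive.ofMul (x v))
    by_cases hv : v = 0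
    · simp [hv]
    obtain ⟨a, ha, he⟩ := R.x_smul h0 hx0 hx hc hv
    rw [he, ofMul_mul, map_add, R.kill_const hc ha, zero_add]
  ex α hα := by
    obtain ⟨h, -, hh⟩ := R.exists_val hα
    exact ⟨h, fun v hv => hh v v0 hv h0 _ (hx v hv)⟩

lemma norm_iff (h : Additive Aˣ →+ ℤ) : IsNorm k (rho x h) ↔ Ultra h := by
  have F := R.frame h0 hx0 hx
  constructor
  · intro hn
    obtain ⟨h', hu, hh⟩ := R.exists_val hn
    have : h' = h := by
      apply F.ext
      intro v hv
      change h' _ = _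
      rw [hh v v0 hv h0 _ (hx v hv), F.base, sub_zero]
    rwa [← this]
  · intro hu
    exact ⟨fun c v hc => F.smul h c v hc, fun u v h1 h2 h3 =>
      hu _ _ _ (R.x_add h0 hx0 hx h1 h2 h3)⟩

/-- key: automorphisms permute the linear forms -/
lemma perm_lin (hn : 2 ≤ n) (θ : A ≃+* A) : ∃ w0 : Fin n → k, w0 ≠ 0 ∧ ∀ v ≠ 0, ∃ w : Fin n → k, w ≠ 0 ∧
    j (θ (x v)) * algebraMap _ B (lin w0) = algebraMap _ B (lin w) := by
  classical
  have F := R.frame h0 hx0 hx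
  have hpf : Fintype (Projectivization k (Fin n → k)) := Fintype.ofFinite _
  let T : Aˣ ≃* Aˣ := Units.mapEquiv (θ : A ≃* A)
  have hT : ∀ u : Aˣ, ((T u : Aˣ) : A) = θ u := fun u => rfl
  have hTs : ∀ u : Aˣ, ((T.symm u : Aˣ) : A) = θ.symm u := fun u => rfl
  let Φ : (Additive Aˣ →+ ℤ) ≃+ (Additive Aˣ →+ ℤ) :=
    { toFun := fun h => h.comp (MulEquiv.toAdditive T : Additive Aˣ ≃+ Additive Aˣ).toAddMonoidHom
      invFun := fun h =>
        h.comp (MulEquiv.toAdditive T.symm : Additive Aˣ ≃+ Additive Aˣ).toAddMonoidHom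
      left_inv := fun h => by
        apply AddMonoidHom.ext
        intro u
        change h (Additive.ofMul (T (T.symm u.toMul))) = _
        simp
      right_inv := fun h => by
        apply AddMonoidHom.ext
        intro u
        change h (Additive.ofMul (T.symm (T u.toMul))) = _
        simp
      map_add' := fun _ _ => rfl }
  have hΦa : ∀ h u, Φ h (Additive.ofMul u) = h (Additive.ofMul (T u)) := fun _ _ => rfl
  have hU : ∀ h, Ultra (Φ h) ↔ Ultra h := by
    intro h
    constructor
    · intro hu u u' u'' he
      have := hu (T.symm u) (T.symm u') (T.symm u'') (by rw [hTs, hTs, hTs, ← he, map_add])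
      simpa [hΦa] using this
    · intro hu u u' u'' he
      rw [hΦa, hΦa, hΦa]
      exact hu _ _ _ (by rw [hT, hT, hT, ← he, map_add])
  have hΦ : ∀ h, IsNorm k (rho x (Φ h)) ↔ IsNorm k (rho x h) := by
    intro h
    rw [R.norm_iff h0 hx0 hx, R.norm_iff h0 hx0 hx, hU]
  have hΦ' : ∀ h, IsNorm k (rho x (Φ.symm h)) ↔ IsNorm k (rho x h) := by
    intro h
    rw [← hΦ, AddEquiv.apply_symm_apply]
  have h2 : 2 ≤ finrank k (Fin n → k) := by simpa using hn
  have hlp : ∀ v : Fin n → k, v ≠ 0 → Frame.Proper (Submodule.span k {v}) := by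
    intro v hv
    refine ⟨by simpa using hv, fun h => ?_⟩
    have := finrank_span_singleton (K := k) hv
    rw [h, finrank_top] at this; omega
  have hmem : ∀ v w : Fin n → k, v ≠ 0 → w ≠ 0 → (v ∈ Submodule.span k {w} ↔
      Submodule.span k {v} = Submodule.span k {w}) := by
    intro v w hv hw
    constructor
    · intro h
      apply Submodule.eq_of_le_of_finrank_le
      · rwa [Submodule.span_singleton_le_iff_mem]
      · rw [finrank_span_singleton hv, finrank_span_singleton hw]
    · intro h
      rw [← h]; exact Submodule.mem_span_singleton_self v
  have hτ : ∀ v : Fin n → k, ∃ t : Fin n → k, v ≠ 0 → t ≠ 0 ∧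
      Φ (F.e (Submodule.span k {t})) = F.e (Submodule.span k {v}) := by
    intro v
    by_cases hv : v = 0
    · exact ⟨0, fun h => absurd hv h⟩
    · obtain ⟨t, ht, h⟩ := F.lines h2 Φ.symm hΦ' v hv
      exact ⟨t, fun _ => ⟨ht, by rw [← h]; simp⟩⟩
  choose τ hτ using hτ
  have hval : ∀ (w : Fin n → k) (v : Fin n → k), v ≠ 0 →
      F.e (Submodule.span k {w}) (Additive.ofMul (x v)) =
        ind (Submodule.span k {w}) v - ind (Submodule.span k {w}) v0 :=
    fun w v hv => F.rho_e _ hv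
  have hconst : ∀ u : Aˣ, (∀ w : Fin n → k, w ≠ 0 →
      F.e (Submodule.span k {w}) (Additive.ofMul u) = 0) →
      ∃ c : k, c ≠ 0 ∧ Units.map (j : A →* B) u = K n B c := by
    intro u hu
    obtain ⟨c, hc, a, ha, d, hd, rfl⟩ := R.unit_form' h0 hx u
    refine ⟨c, hc, ?_⟩
    have hd0 : ∀ r, d r = 0 := by
      intro r
      have := hu r.rep r.rep_nonzero
      rw [ofMul_mul, map_add, R.kill_const hc ha, zero_add, ofMul_prod, map_sum] at this
      simp only [ofMul_zpow, map_zsmul, smul_eq_mul,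
        fun r' : Projectivization k (Fin n → k) => hval r.rep r'.rep r'.rep_nonzero] at this
      simp only [mul_sub, Finset.sum_sub_distrib, ← Finset.sum_mul, hd, zero_mul, sub_zero] at this
      rw [Finset.sum_eq_single r] at this
      · rwa [ind_of_mem (Submodule.mem_span_singleton_self _), mul_one] at this
      · intro r' _ hr'
        rw [ind_of_notMem, mul_zero]
        rw [Submodule.mem_span_singleton]
        rintro ⟨b, hb⟩
        apply hr'
        rw [← r.mk_rep, ← r'.mk_rep, Projectivization.mk_eq_mk_iff']
        exact ⟨b, hb⟩
      · simp
    simp [hd0, ha]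
  refine ⟨τ v0, (hτ v0 h0).1, fun v hv => ?_⟩
  obtain ⟨htv, hev⟩ := hτ v hv
  obtain ⟨ht0, he0⟩ := hτ v0 h0
  obtain ⟨c, hc, hu⟩ := hconst (T (x v) * x (τ v0) * (x (τ v))⁻¹) (by
    intro w hw
    obtain ⟨w', hw', hΦw⟩ := F.lines h2 Φ hΦ w hw
    rw [ofMul_mul, ofMul_mul, ofMul_inv, map_add, map_add, map_neg, ← hΦa, hΦw, hval _ _ hv,
      hval _ _ htv, hval _ _ ht0]
    have key : ∀ v, v ≠ 0 → ind (Submodule.span k {w'}) v = ind (Submodule.span k {w}) (τ v) := by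
      intro v hv
      obtain ⟨htv, hev⟩ := hτ v hv
      have : v ∈ Submodule.span k {w'} ↔ τ v ∈ Submodule.span k {w} := by
        rw [hmem _ _ hv hw', hmem _ _ htv hw]
        constructor
        · intro h
          apply F.e_inj (hlp _ htv) (hlp _ hw)
          apply Φ.injective
          rw [hev, hΦw, h]
        · intro h
          apply F.e_inj (hlp _ hv) (hlp _ hw')
          rw [← hev, ← hΦw, h]
      unfold ind
      simp only [this]
    rw [key v hv, key v0 h0]
    ring)
  refine ⟨c • τ v, smul_ne_zero hc htv, ?_⟩
  have h3 : Units.map (j : A →* B) (T (x v)) * R.L (τ v0) = R.L (c • τ v) := by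
    rw [R.L_smul hc htv, ← hu, map_mul, map_mul, map_inv, hx _ htv, hx _ ht0]
    simp [mul_assoc]
  have h4 := congrArg (Units.val) h3
  rw [Units.val_mul, R.L_val ht0, R.L_val (smul_ne_zero hc htv)] at h4
  exact h4

end x

end RS

end Alg4


open MvPolynomial Module

section Alg5

lemma eval₂_mul_pow {k B : Type*} [CommRing k] [CommRing B] {n : ℕ} (f : k →+* B) (z : Fin n → B)
    (t : B) {s : MvPolynomial (Fin n) k} {d : ℕ} (hs : s.IsHomogeneous d) :
    eval₂ f z s * t ^ d = eval₂ f (fun i => z i * t) s := by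
  rw [eval₂_eq, eval₂_eq, Finset.sum_mul]
  apply Finset.sum_congr rfl
  intro m hm
  have h1 := hs (mem_support_iff.1 hm)
  rw [Finsupp.weight_apply] at h1
  simp only [Pi.one_apply, smul_eq_mul, mul_one] at h1
  simp only [mul_pow]
  rw [Finset.prod_mul_distrib, Finset.prod_pow_eq_pow_sum, ← h1, mul_assoc]
  rfl

namespace RS

variable {k : Type*} [Field k] [Fintype k] {n : ℕ} {A B : Type*} [CommRing A] [CommRing B]
    [Algebra (MvPolynomial (Fin n) k) B] {j : A →+* B} (R : RS (k := k) (n := n) j)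

include R

lemma exists_κ : ∃ κ : k →+* A, ∀ c, j (κ c) = algebraMap (MvPolynomial (Fin n) k) B (C c) := by
  have key : ∀ c : k, ∃ a : A, j a = algebraMap (MvPolynomial (Fin n) k) B (C c) := by
    intro c
    obtain ⟨a, ha⟩ := R.A2 0 (C c) (by simpa using isHomogeneous_C (Fin n) c)
    exact ⟨a, by simpa using ha⟩
  choose f hf using key
  exact ⟨{ toFun := f
           map_one' := R.inj (by rw [hf]; simp)
           map_zero' := R.inj (by rw [hf]; simp)
           map_mul' := fun a b => R.inj (by rw [map_mul, hf, hf, hf]; simp)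
           map_add' := fun a b => R.inj (by rw [map_add, hf, hf, hf]; simp) }, hf⟩

lemma exists_g0 (hn : 0 < n) (θ : A ≃+* A)
    (hθ : ∀ a c, j a = algebraMap (MvPolynomial (Fin n) k) B (C c) → θ a = a) :
    ∃ v0 w0 : Fin n → k, v0 ≠ 0 ∧ w0 ≠ 0 ∧ ∃ y : (Fin n → k) → A, ∃ g : (Fin n → k) → (Fin n → k),
      (∀ v, j (y v) * algebraMap _ B (lin v0) = algebraMap _ B (lin v)) ∧
      (∀ v, j (θ (y v)) * algebraMap _ B (lin w0) = algebraMap _ B (lin (g v))) := by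
  classical
  let v0 : Fin n → k := fun _ => 1
  have h0 : v0 ≠ 0 := fun h => one_ne_zero (congrFun h ⟨0, hn⟩)
  obtain ⟨x, hx0, hx⟩ := R.exists_x h0
  have hxv : ∀ v, v ≠ 0 → j (x v) * algebraMap _ B (lin v0) = algebraMap _ B (lin v) := by
    intro v hv
    rw [← R.L_val hv, ← R.L_val h0, show j (x v) = ((Units.map (j : A →* B) (x v) : Bˣ) : B)
      from rfl, hx v hv, ← Units.val_mul]
    simp
  have key : ∃ w0 : Fin n → k, w0 ≠ 0 ∧ ∀ v ≠ 0, ∃ w : Fin n → k, w ≠ 0 ∧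
      j (θ (x v)) * algebraMap _ B (lin w0) = algebraMap _ B (lin w) := by
    by_cases h2 : 2 ≤ n
    · exact R.perm_lin h0 hx0 hx h2 θ
    · obtain rfl : n = 1 := by omega
      refine ⟨v0, h0, fun v hv => ⟨v, hv, ?_⟩⟩
      rw [← hxv v hv]
      congr 2
      apply hθ _ (v 0)
      have h3 : v = (v 0) • v0 := by
        funext i
        rw [Subsingleton.elim i 0]; simp [v0]
      apply (R.isUnit_lin h0).mul_left_injective
      change j (x v) * algebraMap _ B (lin v0) = _ * algebraMap _ B (lin v0)
      rw [hxv v hv, ← map_mul, ← lin_smul, ← h3]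
  obtain ⟨w0, hw0, hw⟩ := key
  have : ∀ v : Fin n → k, ∃ (a : A) (w : Fin n → k),
      j a * algebraMap _ B (lin v0) = algebraMap _ B (lin v) ∧
      j (θ a) * algebraMap _ B (lin w0) = algebraMap _ B (lin w) := by
    intro v
    by_cases hv : v = 0
    · exact ⟨0, 0, by simp [hv]⟩
    · obtain ⟨w, -, h⟩ := hw v hv
      exact ⟨x v, w, hxv v hv, h⟩
  choose y g h1 using this
  exact ⟨v0, w0, h0, hw0, y, g, fun v => (h1 v).1, fun v => (h1 v).2⟩

omit [Fintype k] R in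
lemma aeval_lin (f : (Fin n → k) →ₗ[k] (Fin n → k)) (v : Fin n → k) :
    aeval (fun i => lin (f (Pi.single i 1))) (lin v) = lin (f v) := by
  classical
  have h1 : v = ∑ i, v i • Pi.single i (1 : k) := by
    funext l
    simp [Finset.sum_apply, Pi.single_apply]
  have hsum : ∀ (s : Finset (Fin n)) (z : Fin n → (Fin n → k)),
      lin (∑ i ∈ s, z i) = ∑ i ∈ s, lin (z i) := by
    intro s z
    induction s using Finset.induction_on with
    | empty => simp
    | insert a s ha ih => rw [Finset.sum_insert ha, Finset.sum_insert ha, lin_add, ih]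
  conv_rhs => rw [h1, map_sum, hsum]
  unfold lin
  rw [map_sum]
  apply Finset.sum_congr rfl
  intro i _
  rw [map_mul, aeval_X, map_smul]
  have := lin_smul (v i) (f (Pi.single i 1))
  unfold lin at this
  rw [this]
  simp [algebraMap_eq]

omit [Fintype k] R in
lemma aeval_hom (f : (Fin n → k) →ₗ[k] (Fin n → k)) {s : MvPolynomial (Fin n) k} {d : ℕ}
    (hs : s.IsHomogeneous d) :
    (aeval (fun i => lin (f (Pi.single i 1))) s).IsHomogeneous d := by
  have := hs.aeval (fun i => lin (f (Pi.single i (1 : k)))) (n := 1) (fun i => lin_hom _)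
  simpa using this

/-- the substitution automorphism attached to a linear automorphism -/
noncomputable def sub (g : (Fin n → k) ≃ₗ[k] (Fin n → k)) :
    MvPolynomial (Fin n) k →ₐ[k] MvPolynomial (Fin n) k :=
  aeval (fun i => lin (g (Pi.single i 1)))

omit [Fintype k] R in
lemma sub_lin (g : (Fin n → k) ≃ₗ[k] (Fin n → k)) (v : Fin n → k) : sub g (lin v) = lin (g v) :=
  aeval_lin g.toLinearMap v

omit [Fintype k] R in
lemma sub_hom (g : (Fin n → k) ≃ₗ[k] (Fin n → k)) {s : MvPolynomial (Fin n) k} {d : ℕ}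
    (hs : s.IsHomogeneous d) : (sub g s).IsHomogeneous d :=
  aeval_hom g.toLinearMap hs

omit [Fintype k] R in
lemma sub_comp (g h : (Fin n → k) ≃ₗ[k] (Fin n → k)) (hgh : ∀ v, g (h v) = v) :
    (sub g).comp (sub h) = AlgHom.id k _ := by
  ext1 i
  rw [AlgHom.comp_apply, ← lin_single, sub_lin, sub_lin, hgh]
  rfl

omit R in
lemma sub_FF (g : (Fin n → k) ≃ₗ[k] (Fin n → k)) : sub g (FF k n) = FF k n := by
  unfold FF
  rw [map_prod]
  simp only [sub_lin]
  exact Finset.prod_bij (fun v _ => g v) (fun v hv => mem_nzv.2 (by simpa using mem_nzv.1 hv))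
    (fun a _ b _ h => g.injective h)
    (fun b hb => ⟨g.symm b, mem_nzv.2 (by simpa using mem_nzv.1 hb), by simp⟩) (fun _ _ => rfl)

theorem alg_main (hn : 0 < n) (θ : A ≃+* A)
    (hθ : ∀ a c, j a = algebraMap (MvPolynomial (Fin n) k) B (C c) → θ a = a) :
    ∃ g : (Fin n → k) ≃ₗ[k] (Fin n → k), ∀ (a : A) (m : ℕ) (s : MvPolynomial (Fin n) k),
      s.IsHomogeneous (m * (nzv k n).card) →
      j a * algebraMap _ B (FF k n) ^ m = algebraMap _ B s →
      j (θ a) * algebraMap _ B (FF k n) ^ m = algebraMap _ B (sub g s) := by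
  classical
  have := R.dom
  obtain ⟨v0, w0, h0, hw0, y, g, hy, hg⟩ := R.exists_g0 hn θ hθ
  obtain ⟨κ, hκ⟩ := R.exists_κ
  have hθκ : ∀ c, θ (κ c) = κ c := fun c => hθ _ c (hκ c)
  have hv0u := R.isUnit_lin h0
  have hw0u := R.isUnit_lin hw0
  have hyadd : ∀ u v, y (u + v) = y u + y v := by
    intro u v
    apply R.inj
    apply hv0u.mul_left_injective
    simp only
    rw [hy, map_add, add_mul, hy, hy, lin_add, map_add]
  have hysmul : ∀ c v, y (c • v) = κ c * y v := by
    intro c v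
    apply R.inj
    apply hv0u.mul_left_injective
    simp only
    rw [hy, map_mul, hκ, mul_assoc, hy, lin_smul, map_mul]
  let gl : (Fin n → k) →ₗ[k] (Fin n → k) :=
    { toFun := g
      map_add' := fun u v => by
        apply lin_injective
        apply R.ι_inj
        rw [← hg, hyadd, map_add, map_add, add_mul, hg, hg, lin_add, map_add]
      map_smul' := fun c v => by
        apply lin_injective
        apply R.ι_inj
        rw [← hg, hysmul, map_mul, map_mul, hθκ, hκ, mul_assoc, hg, ← map_mul]
        simp [lin_smul] }
  have hinj : Function.Injective gl := by
    rw [← LinearMap.ker_eq_bot, LinearMap.ker_eq_bot']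
    intro v hv
    change g v = 0 at hv
    have h1 := hg v
    rw [hv, lin_zero, map_zero, hw0u.mul_left_eq_zero, map_eq_zero_iff j R.inj,
      EmbeddingLike.map_eq_zero_iff] at h1
    have h2 := hy v
    rw [h1, map_zero, zero_mul] at h2
    apply lin_injective
    apply R.ι_inj
    rw [← h2]; simp
  let ge : (Fin n → k) ≃ₗ[k] (Fin n → k) := LinearEquiv.ofInjectiveEndo gl hinj
  have hge : ∀ v, ge v = g v := fun v => rfl
  refine ⟨ge, ?_⟩
  -- evaluation
  let ev : MvPolynomial (Fin n) k →+* A := eval₂Hom κ (fun i => y (Pi.single i 1))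
  have e1 : ∀ (s : MvPolynomial (Fin n) k) (d : ℕ), s.IsHomogeneous d →
      j (ev s) * algebraMap _ B (lin v0) ^ d = algebraMap _ B s := by
    intro s d hs
    have h1 : j (ev s) = eval₂ (j.comp κ) (fun i => j (y (Pi.single i 1))) s :=
      hom_eval₂ s κ j _
    rw [h1, eval₂_mul_pow _ _ _ hs]
    simp only [hy, lin_single]
    have h2 : j.comp κ = (algebraMap (MvPolynomial (Fin n) k) B).comp C := by
      ext c; exact hκ c
    rw [h2, ← hom_eval₂, eval₂_eta]
  have e2 : ∀ (s : MvPolynomial (Fin n) k) (d : ℕ), s.IsHomogeneous d →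
      j (θ (ev s)) * algebraMap _ B (lin w0) ^ d = algebraMap _ B (sub ge s) := by
    intro s d hs
    have h1 : j (θ (ev s)) = eval₂ ((j.comp (θ : A →+* A)).comp κ)
        (fun i => j (θ (y (Pi.single i 1)))) s :=
      hom_eval₂ s κ (j.comp (θ : A →+* A)) _
    rw [h1, eval₂_mul_pow _ _ _ hs]
    simp only [hg]
    have h2 : (j.comp (θ : A →+* A)).comp κ =
        (algebraMap (MvPolynomial (Fin n) k) B).comp C := by
      ext c
      change j (θ (κ c)) = _
      rw [hθκ]; exact hκ c
    rw [h2, ← hom_eval₂]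
    rfl
  intro a m s hs ha
  have hN := FF_hom (k := k) (n := n)
  have h3 : a * ev (FF k n) ^ m = ev s := by
    apply R.inj
    apply (hv0u.pow (m * (nzv k n).card)).mul_left_injective
    simp only
    rw [e1 s _ hs, ← ha, map_mul, map_pow, mul_comm m, pow_mul, mul_assoc, ← mul_pow, e1 _ _ hN]
  have h4 := congrArg (fun b => j (θ b) * algebraMap _ B (lin w0) ^ (m * (nzv k n).card)) h3
  rw [e2 s _ hs] at h4
  rw [← h4, map_mul, map_mul, map_pow, map_pow, mul_comm m, pow_mul, mul_assoc, ← mul_pow,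
    e2 _ _ hN, sub_FF]

end RS

end Alg5



section Sch1
open HomogeneousLocalization

variable {k : Type*} [Field k] [Fintype k] {n : ℕ}

lemma FF_mem : FF k n ∈ homogeneousSubmodule (Fin n) k (nzv k n).card :=
  (mem_homogeneousSubmodule _ _).2 FF_hom

lemma nzv_card_pos (hn : 0 < n) : 0 < (nzv k n).card := by
  rw [Finset.card_pos]
  refine ⟨Pi.single ⟨0, hn⟩ 1, mem_nzv.2 ?_⟩
  simp

lemma rs_away : RS (k := k) (n := n) (A := Away (homogeneousSubmodule (Fin n) k) (FF k n))
    (B := Localization.Away (FF k n)) (algebraMap _ _) where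
  inj := by
    intro x y h
    exact val_injective _ h
  dom := IsLocalization.isDomain_localization
    (powers_le_nonZeroDivisors_of_noZeroDivisors FF_ne_zero)
  away := inferInstance
  A1 := by
    intro a
    obtain ⟨m, s, hs, rfl⟩ := a.mk_surjective _ FF_mem
    refine ⟨m, s, (mem_homogeneousSubmodule _ _).1 hs, ?_⟩
    rw [HomogeneousLocalization.algebraMap_apply, Away.val_mk, Localization.mk_eq_mk', ← map_pow]
    exact IsLocalization.mk'_spec (M := Submonoid.powers (FF k n)) _ s ⟨FF k n ^ m, ⟨m, rfl⟩⟩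
  A2 := by
    intro m s hs
    refine ⟨Away.mk _ FF_mem m s ((mem_homogeneousSubmodule _ _).2 hs), ?_⟩
    rw [HomogeneousLocalization.algebraMap_apply, Away.val_mk, Localization.mk_eq_mk', ← map_pow]
    exact IsLocalization.mk'_spec (M := Submonoid.powers (FF k n)) _ s ⟨FF k n ^ m, ⟨m, rfl⟩⟩

lemma rs_mk_spec (m : ℕ) (s : MvPolynomial (Fin n) k)
    (hs : s ∈ homogeneousSubmodule (Fin n) k (m • (nzv k n).card)) :
    algebraMap (Away (homogeneousSubmodule (Fin n) k) (FF k n)) (Localization.Away (FF k n))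
      (Away.mk _ FF_mem m s hs) * algebraMap _ (Localization.Away (FF k n)) (FF k n) ^ m =
      algebraMap _ _ s := by
  rw [HomogeneousLocalization.algebraMap_apply, Away.val_mk, Localization.mk_eq_mk', ← map_pow]
  exact IsLocalization.mk'_spec (M := Submonoid.powers (FF k n)) _ s ⟨FF k n ^ m, ⟨m, rfl⟩⟩

/-- graded hom -/
noncomputable def gsub (g : (Fin n → k) ≃ₗ[k] (Fin n → k)) :
    homogeneousSubmodule (Fin n) k →+*ᵍ homogeneousSubmodule (Fin n) k where
  __ := (RS.sub g).toRingHom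
  map_mem := fun h => (mem_homogeneousSubmodule _ _).2
    (RS.sub_hom g ((mem_homogeneousSubmodule _ _).1 h))

omit [Fintype k] in
lemma gsub_apply (g : (Fin n → k) ≃ₗ[k] (Fin n → k)) (x) : gsub g x = RS.sub g x := rfl

omit [Fintype k] in
lemma gsub_comp (g h : (Fin n → k) ≃ₗ[k] (Fin n → k)) (hgh : ∀ v, g (h v) = v) :
    (gsub g).comp (gsub h) = GradedRingHom.id _ := by
  ext x : 1
  exact DFunLike.congr_fun (RS.sub_comp g h hgh) x

omit [Fintype k] in
lemma gsub_irr (g : (Fin n → k) ≃ₗ[k] (Fin n → k)) :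
    HomogeneousIdeal.irrelevant (homogeneousSubmodule (Fin n) k) ≤
      (HomogeneousIdeal.irrelevant (homogeneousSubmodule (Fin n) k)).map (gsub g) := by
  rw [HomogeneousIdeal.irrelevant_le]
  intro i hi x hx
  have h1 : gsub g (gsub g.symm x) = x :=
    DFunLike.congr_fun (gsub_comp g g.symm (fun v => by simp)) x
  rw [← h1]
  have h2 : gsub g.symm x ∈ HomogeneousIdeal.irrelevant (homogeneousSubmodule (Fin n) k) :=
    HomogeneousIdeal.mem_irrelevant_of_mem _ hi ((gsub g.symm).map_mem hx)
  exact Ideal.mem_map_of_mem (gsub g) h2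

/-- The automorphism of projective space. -/
noncomputable def projIso (g : (Fin n → k) ≃ₗ[k] (Fin n → k)) : projSpace k n ≅ projSpace k n where
  hom := Proj.map (gsub g) (gsub_irr g)
  inv := Proj.map (gsub g.symm) (gsub_irr g.symm)
  hom_inv_id := by
    rw [← Proj.map_comp, ← Proj.map_id]
    congr 1
    exact gsub_comp _ _ (fun v => by simp)
  inv_hom_id := by
    rw [← Proj.map_comp, ← Proj.map_id]
    congr 1
    exact gsub_comp _ _ (fun v => by simp)

lemma drinfeld_eq : drinfeldOpens k n = Proj.basicOpen (homogeneousSubmodule (Fin n) k) (FF k n) := by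
  ext x
  change (∀ c : Fin n → k, c ≠ 0 → lin c ∉ x.asHomogeneousIdeal) ↔ FF k n ∉ x.asHomogeneousIdeal
  have hp : x.asHomogeneousIdeal.toIdeal.IsPrime := x.isPrime
  have h : FF k n ∈ x.asHomogeneousIdeal.toIdeal ↔ ∃ v ∈ nzv k n, lin v ∈ x.asHomogeneousIdeal.toIdeal := by
    rw [FF, hp.prod_mem_iff]
  change _ ↔ ¬ (FF k n ∈ x.asHomogeneousIdeal.toIdeal)
  rw [h]
  push Not
  simp only [mem_nzv]
  rfl

omit [Fintype k] in
instance projSpace_reduced : IsReduced (projSpace k n) := by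
  have h : ∀ i, IsReduced ((Proj.affineOpenCover (homogeneousSubmodule (Fin n) k)).openCover.X i) := by
    intro i
    change IsReduced (Spec (CommRingCat.of (Away (homogeneousSubmodule (Fin n) k) i.2.1)))
    rw [affine_isReduced_iff]
    change _root_.IsReduced (Away (homogeneousSubmodule (Fin n) k) i.2.1)
    have h2 : _root_.IsReduced (Localization.Away (i.2.1 : MvPolynomial (Fin n) k)) :=
      isReduced_localizationPreserves (Submonoid.powers (i.2.1 : MvPolynomial (Fin n) k)) _ inferInstance
    exact isReduced_of_injective (algebraMap _ (Localization.Away (i.2.1 : MvPolynomial (Fin n) k)))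
      (fun x y h => val_injective _ h)
  exact IsReduced.of_openCover _ (Proj.affineOpenCover (homogeneousSubmodule (Fin n) k)).openCover

end Sch1



section Sch2
universe u
open HomogeneousLocalization

lemma awayι_comp_map_gen {A σ : Type u} [CommRing A] [SetLike σ A] [AddSubgroupClass σ A]
    {𝒜 : ℕ → σ} [GradedRing 𝒜] (f : 𝒜 →+*ᵍ 𝒜)
    (hf : HomogeneousIdeal.irrelevant 𝒜 ≤ (HomogeneousIdeal.irrelevant 𝒜).map f)
    {i : ℕ} (hi : 0 < i) (F F' : A) (hF : F ∈ 𝒜 i) (hF' : F' ∈ 𝒜 i) (h : f F = F')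
    (u : Away 𝒜 F →+* Away 𝒜 F')
    (hu : ∀ m s hs, u (Away.mk 𝒜 hF m s hs) = Away.mk 𝒜 hF' m (f s) (f.map_mem hs)) :
    Proj.awayι 𝒜 F' hF' hi ≫ Proj.map f hf =
      Spec.map (CommRingCat.ofHom u) ≫ Proj.awayι 𝒜 F hF hi := by
  subst h
  have : u = Away.map f F := by
    ext1 a
    obtain ⟨m, s, hs, rfl⟩ := a.mk_surjective _ hF
    rw [hu, Away.map_mk]
  rw [this]
  exact Proj.awayι_comp_map f hf hi F hF

variable {k : Type*} [Field k] [Fintype k] {n : ℕ}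

instance openImm_ι : IsOpenImmersion (drinfeldι k n) := by
  rw [drinfeldι]
  infer_instance

/-- Omega is affine. -/
noncomputable def omegaIso (hn : 0 < n) : drinfeldScheme k n ≅
    Spec (CommRingCat.of (Away (homogeneousSubmodule (Fin n) k) (FF k n))) :=
  IsOpenImmersion.isoOfRangeEq (drinfeldι k n)
    (Proj.awayι (homogeneousSubmodule (Fin n) k) (FF k n) FF_mem (nzv_card_pos hn)) (by
      have h := Proj.opensRange_awayι (homogeneousSubmodule (Fin n) k) (FF k n) FF_mem
        (nzv_card_pos hn)
      rw [← drinfeld_eq] at h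
      have h2 : ((Proj.awayι (homogeneousSubmodule (Fin n) k) (FF k n) FF_mem
        (nzv_card_pos hn)).opensRange : Set (projSpace k n)) = (drinfeldOpens k n : Set (projSpace k n)) := by rw [h]
      exact (Scheme.Opens.range_ι _).trans h2.symm)

lemma omegaIso_fac (hn : 0 < n) : (omegaIso (k := k) hn).hom ≫
    Proj.awayι (homogeneousSubmodule (Fin n) k) (FF k n) FF_mem (nzv_card_pos hn) =
      drinfeldι k n :=
  IsOpenImmersion.isoOfRangeEq_hom_fac ..

instance dominant_ι : IsDominant (drinfeldι k n) := by
  constructor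
  change DenseRange (drinfeldOpens k n).ι
  rw [DenseRange, Scheme.Opens.range_ι, drinfeld_eq]
  rw [dense_iff_inter_open]
  intro U hU hne
  obtain ⟨x, hx⟩ := hne
  obtain ⟨_, ⟨_, ⟨f, rfl⟩, rfl⟩, hxf, hfU⟩ :=
    (Proj.isBasis_basicOpen (homogeneousSubmodule (Fin n) k)).exists_subset_of_mem_open hx hU
  have hf0 : f ≠ 0 := by
    rintro rfl
    exact hxf (zero_mem x.asHomogeneousIdeal.toIdeal)
  let y : ProjectiveSpectrum (homogeneousSubmodule (Fin n) k) :=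
    { asHomogeneousIdeal := ⊥
      isPrime := by
        rw [HomogeneousIdeal.toIdeal_bot]
        exact Ideal.isPrime_bot
      not_irrelevant_le := fun h => x.not_irrelevant_le (h.trans bot_le) }
  have hy : ∀ z : MvPolynomial (Fin n) k, z ∈ y.asHomogeneousIdeal → z = 0 := by
    intro z hz
    have hz2 : z ∈ (⊥ : HomogeneousIdeal (homogeneousSubmodule (Fin n) k)).toIdeal := hz
    rw [HomogeneousIdeal.toIdeal_bot] at hz2
    exact hz2
  exact ⟨y, hfU (fun h => hf0 (hy f h)), fun h => FF_ne_zero (hy _ h)⟩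

lemma awayι_struct (hn : 0 < n) :
    Proj.awayι (homogeneousSubmodule (Fin n) k) (FF k n) FF_mem (nzv_card_pos hn) ≫ projStruct k n =
    Spec.map (CommRingCat.ofHom ((fromZeroRingHom (homogeneousSubmodule (Fin n) k)
      (Submonoid.powers (FF k n))).comp
      ((GradedRing.projZeroRingHom' (homogeneousSubmodule (Fin n) k)).comp
        (algebraMap k (MvPolynomial (Fin n) k))))) := by
  rw [projStruct, Proj.awayι_toSpecZero_assoc, ← Spec.map_comp]
  rfl

theorem drinfeld_exists (hn : 0 < n) (φ : drinfeldScheme k n ≅ drinfeldScheme k n)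
    (hφ : φ.hom ≫ drinfeldStruct k n = drinfeldStruct k n) :
    ∃ ψ : projSpace k n ≅ projSpace k n, drinfeldι k n ≫ ψ.hom = φ.hom ≫ drinfeldι k n := by
  set e := omegaIso (k := k) hn with he
  set ι := Proj.awayι (homogeneousSubmodule (Fin n) k) (FF k n) FF_mem (nzv_card_pos hn) with hι
  have fac : e.hom ≫ ι = drinfeldι k n := omegaIso_fac hn
  obtain ⟨t, ht⟩ : ∃ t, Spec.map t = e.inv ≫ φ.hom ≫ e.hom := ⟨Spec.preimage _, Spec.map_preimage _⟩
  obtain ⟨t', ht'⟩ : ∃ t, Spec.map t = e.inv ≫ φ.inv ≫ e.hom := ⟨Spec.preimage _, Spec.map_preimage _⟩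
  have h1 : t ≫ t' = 𝟙 _ := by
    apply Spec.map_injective
    rw [Spec.map_comp, ht, ht']; simp
  have h2 : t' ≫ t = 𝟙 _ := by
    apply Spec.map_injective
    rw [Spec.map_comp, ht, ht']; simp
  let θ : Away (homogeneousSubmodule (Fin n) k) (FF k n) ≃+*
      Away (homogeneousSubmodule (Fin n) k) (FF k n) :=
    RingEquiv.ofRingHom t.hom t'.hom (by rw [← CommRingCat.hom_comp, h2]; rfl)
      (by rw [← CommRingCat.hom_comp, h1]; rfl)
  have hφι : φ.hom ≫ drinfeldι k n = e.hom ≫ Spec.map t ≫ ι := by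
    rw [ht, ← fac]; simp
  have hst : Spec.map t ≫ ι ≫ projStruct k n = ι ≫ projStruct k n := by
    rw [← cancel_epi e.hom, ← Category.assoc, ← Category.assoc, Category.assoc e.hom, ← hφι,
      ← Category.assoc e.hom, fac, Category.assoc]
    exact hφ
  rw [hι, awayι_struct hn, ← Spec.map_comp] at hst
  have hst2 := Spec.map_injective hst
  have hθ : ∀ (a : Away (homogeneousSubmodule (Fin n) k) (FF k n)) (c : k),
      algebraMap _ (Localization.Away (FF k n)) a =
        algebraMap (MvPolynomial (Fin n) k) (Localization.Away (FF k n)) (C c) →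
        θ a = a := by
    intro a c hac
    have h3 : ∀ c : k, θ (fromZeroRingHom (homogeneousSubmodule (Fin n) k)
      (Submonoid.powers (FF k n)) (GradedRing.projZeroRingHom' (homogeneousSubmodule (Fin n) k)
        (C c))) = fromZeroRingHom (homogeneousSubmodule (Fin n) k)
      (Submonoid.powers (FF k n)) (GradedRing.projZeroRingHom' (homogeneousSubmodule (Fin n) k)
        (C c)) := fun c => DFunLike.congr_fun (congrArg CommRingCat.Hom.hom hst2) c
    have h4 : a = fromZeroRingHom (homogeneousSubmodule (Fin n) k)
      (Submonoid.powers (FF k n)) (GradedRing.projZeroRingHom' (homogeneousSubmodule (Fin n) k)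
        (C c)) := by
      apply val_injective
      change algebraMap _ (Localization.Away (FF k n)) a = _
      rw [hac]
      change _ = Localization.mk _ _
      rw [← Localization.mk_one_eq_algebraMap]
      congr 1
      exact (DirectSum.decompose_of_mem_same _ ((mem_homogeneousSubmodule _ _).2 (isHomogeneous_C _ c))).symm
    rw [h4]
    exact h3 c
  obtain ⟨g, hg⟩ := rs_away.alg_main hn θ hθ
  refine ⟨projIso g, ?_⟩
  rw [hφι, ← fac, Category.assoc]
  congr 1
  have := awayι_comp_map_gen (gsub g) (gsub_irr g) (nzv_card_pos hn) (FF k n) (FF k n) FF_mem FF_mem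
    (RS.sub_FF g) t.hom (by
      intro m s hs
      apply val_injective
      have h5 := hg (Away.mk _ FF_mem m s hs) m s ((mem_homogeneousSubmodule _ _).1 hs)
        (rs_mk_spec m s hs)
      have h6 := rs_mk_spec m (gsub g s) ((gsub g).map_mem hs)
      have h7 := h5.trans h6.symm
      have hu : IsUnit (algebraMap _ (Localization.Away (FF k n)) (FF k n) ^ m) :=
        (IsLocalization.Away.algebraMap_isUnit _).pow m
      exact hu.mul_right_cancel h7)
  exact this

omit [Fintype k] in
lemma projSpace_zero_empty : IsEmpty (projSpace k 0) := by
  constructor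
  intro x
  apply x.not_irrelevant_le
  rw [HomogeneousIdeal.irrelevant_le]
  intro i hi f hf
  have h0 : f = 0 := by
    rw [eq_C_of_isEmpty f]
    have h1 : f.IsHomogeneous i := (mem_homogeneousSubmodule _ _).1 hf
    rw [h1.coeff_eq_zero (by simpa using hi.ne), C_0]
  rw [h0]
  exact zero_mem x.asHomogeneousIdeal.toIdeal

theorem drinfeld_exists' (φ : drinfeldScheme k n ≅ drinfeldScheme k n)
    (hφ : φ.hom ≫ drinfeldStruct k n = drinfeldStruct k n) :
    ∃ ψ : projSpace k n ≅ projSpace k n, drinfeldι k n ≫ ψ.hom = φ.hom ≫ drinfeldι k n := by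
  rcases Nat.eq_zero_or_pos n with rfl | hn
  · refine ⟨Iso.refl _, ?_⟩
    have h0 := projSpace_zero_empty (k := k)
    have : IsEmpty (drinfeldScheme k 0) := ⟨fun x => h0.false ((drinfeldι k 0) x)⟩
    exact (isInitialOfIsEmpty (X := drinfeldScheme k 0)).hom_ext _ _
  · exact drinfeld_exists hn φ hφ

end Sch2

/-- Every `k`-automorphism `φ` of the Drinfeld half-space `Ω(V)` over a finite
field `k` extends uniquely to a `k`-automorphism `ψ` of `P(V)`:
`ψ ∘ ι = ι ∘ φ` where `ι : Ω(V) → P(V)` is the open immersion. -/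
theorem stmt_0 (k : Type*) [Field k] [Fintype k]
    (V : Type*) [AddCommGroup V] [Module k V] [FiniteDimensional k V]
    (φ : drinfeldScheme k (finrank k V) ≅ drinfeldScheme k (finrank k V))
    (hφ : φ.hom ≫ drinfeldStruct k (finrank k V) = drinfeldStruct k (finrank k V)) :
    ∃! ψ : projSpace k (finrank k V) ≅ projSpace k (finrank k V),
      ψ.hom ≫ projStruct k (finrank k V) = projStruct k (finrank k V) ∧
        drinfeldι k (finrank k V) ≫ ψ.hom = φ.hom ≫ drinfeldι k (finrank k V) := by
  obtain ⟨ψ, hψ⟩ := drinfeld_exists' φ hφ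
  refine ⟨ψ, ⟨?_, hψ⟩, ?_⟩
  · apply ext_of_isDominant (drinfeldι k (finrank k V))
    rw [← Category.assoc, hψ, Category.assoc]
    exact hφ
  · rintro ψ' ⟨-, h'⟩
    ext1
    apply ext_of_isDominant (drinfeldι k (finrank k V))
    rw [h', hψ]
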